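/- arXiv:1706.01313 — 5 statements merged into one kernel-verified Lean document; each statement's English description precedes it below -/
import Mathlib

section
/- Let S be a left reversible semigroup with a finite choice of generators X via π : X⁺ → S, such that S¹ satisfies the Klawe condition. If S has maximal global cogrowth (γ^{S,X} = |X|), then S is left amenable. -/
/-!
Let `M` be the quotient of `S¹` by `a ~ b ↔ ∃ t, a * t = b * t`. Left reversibility makes this an
equivalence relation, and the Klawe condition makes every generator `x` act on `M` by an injection,
hence by an isometry of `ℓ²(M)`. Let `f j` be the distribution on `M` of a uniformly random word of
length `j`, so that `f (j + 1)` is the average over `x` of the translates `x • f j`.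

The number of pairs of words of lengths `k`, `l` with the same image in `M` is
`|X| ^ (k + l) * ⟪f k, f l⟫`. Were `p j = ‖f j‖²` exponentially small, the global cogrowth rate
would therefore be less than `|X|` (`not_decay`). So `p`, which is decreasing, varies by a factor
less than `2` over some arbitrarily long window `J ≤ j < J + K`. The variance identity
`∑ x, ‖x • f j - f (j + 1)‖² = |X| * (p j - p (j + 1))` (`sum_variance`) bounds the total deviation
of `x • (f j)²` from `(f (j + 1))²` over the window, and hence the normalised sum of the `(f j)²`
over the window is an almost invariant mean on `M` (`exists_almost_invariant`).

Such a finitely supported mean lifts to `S` with the same almost invariance: finitely many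
equivalences `x * σ m ~ σ (x m)`, with `σ` a section of `S¹ → M`, become equalities after
multiplication on the right by one common `t` (`exists_approx_mean`). A limit along an ultrafilter
gives an invariant mean for the generators, hence for all of `S`.
-/

open Filter

/-- The global cogrowth function. -/
noncomputable def gammaFn {X : Type} {S : Type*} [Mul S]
    (π : FreeSemigroup X →ₙ* S) (n : ℕ) : ℕ :=
  Nat.card {p : FreeSemigroup X × FreeSemigroup X //
    p.1.length + p.2.length = n ∧ π p.1 = π p.2}

/-- The global cogrowth rate. -/
noncomputable def gammaRate {X : Type} {S : Type*} [Mul S]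
    (π : FreeSemigroup X →ₙ* S) : ℝ :=
  Filter.atTop.limsup (fun n : ℕ => (gammaFn π n : ℝ) ^ (1 / (n : ℝ)))

/-- `S` is left reversible: any two right ideals intersect. Equivalently, for all
`a, b ∈ S` there are `u, v ∈ S¹` with `a·u = b·v`. -/
def IsLeftReversible (S : Type*) [Semigroup S] : Prop :=
  ∀ a b : S, ∃ u v : WithOne S, (a : WithOne S) * u = (b : WithOne S) * v

/-- The monoid `S¹ = WithOne S` satisfies the Klawe condition. -/
def KlaweCondition (S : Type*) [Semigroup S] : Prop :=
  ∀ s x y : WithOne S, s * x = s * y → ∃ t : WithOne S, x * t = y * t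

/-- `S` is left amenable: there is a left-invariant finitely additive probability
measure on the subsets of `S`. -/
def IsLeftAmenable (S : Type*) [Semigroup S] : Prop :=
  ∃ μ : Set S → ℝ,
    (∀ A : Set S, 0 ≤ μ A ∧ μ A ≤ 1) ∧
    μ Set.univ = 1 ∧
    (∀ A B : Set S, Disjoint A B → μ (A ∪ B) = μ A + μ B) ∧
    (∀ (a : S) (T : Set S), μ {s : S | a * s ∈ T} = μ T)

/-! ### Finitely supported functions

For `φ : M → ℝ` and a finitely supported `f`, `Finsupp.linearCombination ℝ φ f` is the pairing
`∑ m, f m * φ m`; products of finitely supported functions are pointwise. -/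

theorem lc_mono {M : Type*} {φ ψ : M → ℝ} {a b : M →₀ ℝ}
    (h : ∀ m, a m * φ m ≤ b m * ψ m) :
    Finsupp.linearCombination ℝ φ a ≤ Finsupp.linearCombination ℝ ψ b := by
  classical
  rw [Finsupp.linearCombination_apply, Finsupp.linearCombination_apply,
    Finsupp.sum_of_support_subset a (s := a.support ∪ b.support) Finset.subset_union_left _
      (by simp),
    Finsupp.sum_of_support_subset b (s := a.support ∪ b.support) Finset.subset_union_right _
      (by simp)]
  exact Finset.sum_le_sum fun m _ => h m

/-- The sum of all values of a finitely supported function; thus `total (f * g)` is the `ℓ²` inner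
product. -/
noncomputable def total {M : Type*} : (M →₀ ℝ) →ₗ[ℝ] ℝ :=
  Finsupp.linearCombination ℝ (fun _ => (1 : ℝ))

theorem mapDomain_mul_self {M : Type*} {g : M → M} (hg : Function.Injective g) (f : M →₀ ℝ) :
    Finsupp.mapDomain g (f * f) = Finsupp.mapDomain g f * Finsupp.mapDomain g f := by
  ext m
  by_cases hm : m ∈ Set.range g
  · obtain ⟨m, rfl⟩ := hm
    simp [Finsupp.mapDomain_apply hg]
  · simp [Finsupp.mapDomain_of_notMem_range _ _ hm]

/-! ### A random walk driven by injections -/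

section walk
variable {X M : Type*} [Fintype X]

/-- The distribution after `j` steps of the random walk started at `o` which applies at each step
a map `act x` with `x` uniform in `X`. -/
noncomputable def walk (act : X → M → M) (o : M) : ℕ → (M →₀ ℝ)
  | 0 => Finsupp.single o 1
  | j + 1 => (Fintype.card X : ℝ)⁻¹ • ∑ x, Finsupp.mapDomain (act x) (walk act o j)

/-- The probability that two independent `j`-step walks end at the same point, i.e. the squared
`ℓ²` norm of `walk act o j`. -/
noncomputable def collision (act : X → M → M) (o : M) (j : ℕ) : ℝ :=
  total (walk act o j * walk act o j)

theorem collision_zero (act : X → M → M) (o : M) : collision act o 0 = 1 := by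
  simp [collision, walk, total, ← Finsupp.single_mul]

theorem collision_nonneg (act : X → M → M) (o : M) (j : ℕ) : 0 ≤ collision act o j := by
  have := lc_mono (φ := fun _ : M => (1 : ℝ)) (ψ := fun _ => 1) (a := 0)
    (b := walk act o j * walk act o j) (fun m => by simpa using mul_self_nonneg _)
  simpa [collision, total] using this

theorem total_mapDomain {g : M → M} (f : M →₀ ℝ) :
    total (Finsupp.mapDomain g f) = total f := by
  simp only [total, Finsupp.linearCombination_mapDomain]
  rfl

/-- The steps `act x` preserve the `ℓ²` norm and `walk act o (j + 1)` is the average of the images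
of `walk act o j`, so the drop of the squared norm is exactly the variance around that average. -/
theorem sum_variance [Nonempty X] {act : X → M → M} (hact : ∀ x, Function.Injective (act x)) (o : M)
    (j : ℕ) :
    ∑ x, total ((Finsupp.mapDomain (act x) (walk act o j) - walk act o (j + 1)) *
      (Finsupp.mapDomain (act x) (walk act o j) - walk act o (j + 1))) =
    Fintype.card X * (collision act o j - collision act o (j + 1)) := by
  have hc : (Fintype.card X : ℝ) ≠ 0 := by simp
  have key : ∑ x, ((Finsupp.mapDomain (act x) (walk act o j) - walk act o (j + 1)) *
      (Finsupp.mapDomain (act x) (walk act o j) - walk act o (j + 1))) =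
      ∑ x, Finsupp.mapDomain (act x) (walk act o j * walk act o j) -
        (Fintype.card X : ℝ) • (walk act o (j + 1) * walk act o (j + 1)) := by
    ext m
    have h1 : ∑ x, (Finsupp.mapDomain (act x) (walk act o j)) m =
        Fintype.card X * walk act o (j + 1) m := by
      simp [walk]
    simp only [Finsupp.finsetSum_apply, Finsupp.sub_apply, Finsupp.mul_apply, Finsupp.smul_apply,
      mapDomain_mul_self (hact _), smul_eq_mul]
    have h2 : ∀ a b : ℝ, (a - b) * (a - b) = a * a - (2 * b) * a + b * b := by intros; ring
    simp only [h2, Finset.sum_add_distrib, Finset.sum_sub_distrib, ← Finset.mul_sum, h1]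
    simp
    ring
  rw [← map_sum, key, map_sub, map_sum, map_smul]
  simp only [total_mapDomain]
  simp [collision]
  ring

theorem total_sq_nonneg (f : M →₀ ℝ) : 0 ≤ total (f * f) := by
  have := lc_mono (φ := fun _ : M => (1 : ℝ)) (ψ := fun _ => 1) (a := 0)
    (b := f * f) (fun m => by simpa using mul_self_nonneg _)
  simpa [total] using this

theorem collision_anti [Nonempty X] {act : X → M → M} (hact : ∀ x, Function.Injective (act x))
    (o : M) : Antitone (collision act o) := by
  refine antitone_nat_of_succ_le fun j => ?_
  have h := sum_variance hact o j
  have h0 := Finset.sum_nonneg fun x (_ : x ∈ (Finset.univ : Finset X)) =>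
    total_sq_nonneg (Finsupp.mapDomain (act x) (walk act o j) - walk act o (j + 1))
  rw [h] at h0
  have hc : (0 : ℝ) < Fintype.card X := by simp [Fintype.card_pos]
  have := nonneg_of_mul_nonneg_right h0 hc
  linarith

/-- A form of `|⟨g² - h², φ⟩| ≤ ‖g - h‖ ‖g + h‖` with the product on the right already split by
the arithmetic-geometric mean inequality with parameter `η`. -/
theorem lc_sq_le {φ : M → ℝ} (hφ : ∀ m, 0 ≤ φ m ∧ φ m ≤ 1) {η : ℝ} (hη : 0 < η)
    (g h : M →₀ ℝ) :
    Finsupp.linearCombination ℝ φ (g * g) - Finsupp.linearCombination ℝ φ (h * h) ≤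
      (2 * η)⁻¹ * total ((g - h) * (g - h)) + η * (total (g * g) + total (h * h)) := by
  have := lc_mono (φ := φ) (ψ := fun _ => (1 : ℝ)) (a := g * g - h * h)
    (b := (2 * η)⁻¹ • ((g - h) * (g - h)) + η • (g * g + h * h)) (fun m => by
      simp only [Finsupp.sub_apply, Finsupp.mul_apply, Finsupp.add_apply, Finsupp.smul_apply,
        smul_eq_mul, mul_one]
      have hR : 0 ≤ (2 * η)⁻¹ * ((g m - h m) * (g m - h m)) + η * (g m * g m + h m * h m) :=
        add_nonneg (mul_nonneg (by positivity) (mul_self_nonneg _))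
          (mul_nonneg hη.le (add_nonneg (mul_self_nonneg _) (mul_self_nonneg _)))
      have hL : g m * g m - h m * h m ≤
          (2 * η)⁻¹ * ((g m - h m) * (g m - h m)) + η * (g m * g m + h m * h m) := by
        have e : (2 * η)⁻¹ * ((g m - h m) * (g m - h m)) + η * (g m * g m + h m * h m)
          - (g m * g m - h m * h m) =
          (2 * η)⁻¹ * ((g m - h m) - η * (g m + h m)) ^ 2 + η / 2 * (g m - h m) ^ 2 := by
          field_simp; ring
        have : 0 ≤ (2 * η)⁻¹ * ((g m - h m) - η * (g m + h m)) ^ 2 + η / 2 * (g m - h m) ^ 2 := by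
          positivity
        linarith
      nlinarith [hφ m])
  simpa [total, mul_add] using this

/-- A decreasing sequence without exponential decay loses less than half of its value over some
window of any given length `K`. The rate is written `r ^ (2 * j)` because `p` is a squared norm. -/
theorem exists_slow {p : ℕ → ℝ} (hp0 : p 0 = 1) (hp : Antitone p)
    (hnd : ¬ ∃ r : ℝ, 0 < r ∧ r < 1 ∧ ∀ j, p j ≤ 2 * r ^ (2 * j)) {K : ℕ} (hK : 0 < K) :
    ∃ J, p J / 2 < p (J + K) := by
  by_contra! hcon
  apply hnd
  have hK' : (0 : ℝ) < 2 * K := by positivity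
  -- If every window of length `K` halves `p`, the rate `r` with `r ^ (2 * K) = 1 / 2` works.
  refine ⟨(1 / 2 : ℝ) ^ (1 / (2 * K : ℝ)), by positivity,
    Real.rpow_lt_one (by norm_num) (by norm_num) (by positivity), ?_⟩
  set r := (1 / 2 : ℝ) ^ (1 / (2 * K : ℝ)) with hr
  have r0 : 0 < r := by positivity
  have r1 : r < 1 := Real.rpow_lt_one (by norm_num) (by norm_num) (by positivity)
  have hrK : r ^ (2 * K) = 1 / 2 := by
    rw [hr, ← Real.rpow_natCast, ← Real.rpow_mul (by norm_num)]
    push_cast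
    rw [one_div_mul_cancel hK'.ne', Real.rpow_one]
  intro j
  induction j using Nat.strong_induction_on with
  | _ j ih =>
    by_cases hj : j < K
    · have h1 : r ^ (2 * K) ≤ r ^ (2 * j) :=
        pow_le_pow_of_le_one r0.le r1.le (by omega)
      have := hp (Nat.zero_le j)
      rw [hrK] at h1
      linarith
    · obtain ⟨i, rfl⟩ := Nat.exists_eq_add_of_le' (not_lt.1 hj)
      have h1 := ih i (by omega)
      have h2 := hcon i
      rw [mul_add, pow_add, hrK]
      linarith

/-- Without exponential decay of the collision probabilities there are finitely supported
probability distributions almost invariant under every `act x`: the normalised sum of the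
`(walk act o j)²` over a long window of `j` on which the norms stay comparable. -/
theorem exists_almost_invariant [Nonempty X] {act : X → M → M}
    (hact : ∀ x, Function.Injective (act x)) (o : M)
    (hnd : ¬ ∃ r : ℝ, 0 < r ∧ r < 1 ∧ ∀ j, collision act o j ≤ 2 * r ^ (2 * j))
    {δ : ℝ} (hδ : 0 < δ) :
    ∃ d : M →₀ ℝ, (∀ m, 0 ≤ d m) ∧ total d = 1 ∧
      ∀ φ : M → ℝ, (∀ m, 0 ≤ φ m ∧ φ m ≤ 1) → ∀ x,
        |Finsupp.linearCombination ℝ (φ ∘ act x) d - Finsupp.linearCombination ℝ φ d| ≤ δ := by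
  set p := collision act o with hpdef
  set N : ℝ := (Fintype.card X : ℝ)
  have hN : 0 ≤ N := by positivity
  have hanti : Antitone p := collision_anti hact o
  obtain ⟨K, hK⟩ := exists_nat_ge (4 / δ * (2 * N / δ + 1))
  have hK0 : 0 < K := by
    have : (0 : ℝ) < K := lt_of_lt_of_le (by positivity) hK
    exact_mod_cast this
  obtain ⟨J, hJ⟩ := exists_slow (collision_zero act o) hanti hnd hK0
  have hpn : ∀ j, 0 ≤ p j := collision_nonneg act o
  have hJ0 : 0 < p J := by
    have h1 := hanti (Nat.le_add_right J K)
    have := hpn J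
    change p J / 2 < p (J + K) at hJ
    linarith
  set f := walk act o
  set Z := ∑ i ∈ Finset.range K, p (J + i) with hZ
  have hZK : K * (p J / 2) ≤ Z := by
    have : ∑ i ∈ Finset.range K, (p J / 2) ≤ Z := Finset.sum_le_sum fun i hi =>
      hJ.le.trans (hanti (by have := Finset.mem_range.1 hi; omega))
    simpa using this
  have hZ0 : 0 < Z := lt_of_lt_of_le (by positivity) hZK
  refine ⟨Z⁻¹ • ∑ i ∈ Finset.range K, f (J + i) * f (J + i), fun m => ?_, ?_, ?_⟩
  · simp only [Finsupp.smul_apply, Finsupp.finsetSum_apply, smul_eq_mul, Finsupp.mul_apply]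
    exact mul_nonneg (inv_nonneg.2 hZ0.le) (Finset.sum_nonneg fun i _ => mul_self_nonneg (f (J + i) m))
  · rw [map_smul, map_sum, smul_eq_mul]
    exact inv_mul_cancel₀ hZ0.ne'
  · intro φ hφ x
    set η := δ / 4 with hη
    have hη0 : 0 < η := by positivity
    set E := Finsupp.linearCombination ℝ φ
    have hE : ∀ j, 0 ≤ E (f j * f j) ∧ E (f j * f j) ≤ p j := fun j => by
      constructor
      · have := lc_mono (φ := φ) (ψ := φ) (a := 0) (b := f j * f j) (fun m => by
          simpa using mul_nonneg (mul_self_nonneg _) (hφ m).1)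
        simpa using this
      · exact lc_mono (fun m => mul_le_mul_of_nonneg_left (hφ m).2
          (by simpa using mul_self_nonneg _))
    have hstep : ∀ j, |E (Finsupp.mapDomain (act x) (f j * f j)) - E (f (j + 1) * f (j + 1))| ≤
        (2 * η)⁻¹ * (N * (p j - p (j + 1))) + η * (2 * p j) := by
      intro j
      set g := Finsupp.mapDomain (act x) (f j) with hg
      have hgp : total (g * g) = p j := by
        rw [hg, ← mapDomain_mul_self (hact x), total_mapDomain]; rfl
      have hv : total ((g - f (j + 1)) * (g - f (j + 1))) ≤ N * (p j - p (j + 1)) := by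
        rw [hpdef, ← sum_variance hact o j]
        exact Finset.single_le_sum (f := fun x =>
          total ((Finsupp.mapDomain (act x) (walk act o j) - walk act o (j + 1)) *
            (Finsupp.mapDomain (act x) (walk act o j) - walk act o (j + 1))))
          (fun y _ => total_sq_nonneg _) (Finset.mem_univ x)
      have h1 := lc_sq_le hφ hη0 g (f (j + 1))
      have h2 := lc_sq_le hφ hη0 (f (j + 1)) g
      have e : (f (j + 1) - g) * (f (j + 1) - g) = (g - f (j + 1)) * (g - f (j + 1)) := by
        ext m; simp only [Finsupp.mul_apply, Finsupp.sub_apply]; ring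
      rw [e] at h2
      have hq : total (f (j + 1) * f (j + 1)) = p (j + 1) := rfl
      rw [hgp, hq] at h1 h2
      have h3 : (2 * η)⁻¹ * total ((g - f (j + 1)) * (g - f (j + 1))) ≤
        (2 * η)⁻¹ * (N * (p j - p (j + 1))) := mul_le_mul_of_nonneg_left hv (by positivity)
      have h4 : η * (p j + p (j + 1)) ≤ η * (2 * p j) :=
        mul_le_mul_of_nonneg_left (by linarith [hanti (Nat.le_succ j)]) hη0.le
      rw [mapDomain_mul_self (hact x), abs_le]
      constructor <;> linarith
    have hcomp : ∀ d : M →₀ ℝ, Finsupp.linearCombination ℝ (φ ∘ act x) d =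
        E (Finsupp.mapDomain (act x) d) := fun d =>
      (Finsupp.linearCombination_mapDomain ℝ (act x) d).symm
    -- Each `act x` nearly carries the `i`-th term of the window to the next one, so the difference
    -- telescopes up to the two end terms.
    have hdec : ∑ i ∈ Finset.range K, E (Finsupp.mapDomain (act x) (f (J + i) * f (J + i))) -
        ∑ i ∈ Finset.range K, E (f (J + i) * f (J + i)) =
        ∑ i ∈ Finset.range K, (E (Finsupp.mapDomain (act x) (f (J + i) * f (J + i))) -
          E (f (J + i + 1) * f (J + i + 1))) +
        (E (f (J + K) * f (J + K)) - E (f J * f J)) := by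
      have := Finset.sum_range_sub (fun i => E (f (J + i) * f (J + i))) K
      simp only [Nat.add_zero] at this
      rw [← this, ← Finset.sum_sub_distrib, ← Finset.sum_add_distrib]
      refine Finset.sum_congr rfl fun i _ => ?_
      rw [← add_assoc J i 1]; ring
    have hsum : |∑ i ∈ Finset.range K, (E (Finsupp.mapDomain (act x) (f (J + i) * f (J + i))) -
          E (f (J + i + 1) * f (J + i + 1)))| ≤ (2 * η)⁻¹ * (N * p J) + η * (2 * Z) := by
      refine (Finset.abs_sum_le_sum_abs _ _).trans
        ((Finset.sum_le_sum fun i _ => hstep (J + i)).trans ?_)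
      rw [Finset.sum_add_distrib, ← Finset.mul_sum, ← Finset.mul_sum, ← Finset.mul_sum,
        ← Finset.mul_sum, ← hZ]
      have ht := Finset.sum_range_sub' (fun i => p (J + i)) K
      have ht' : ∑ i ∈ Finset.range K, (p (J + i) - p (J + i + 1)) = p J - p (J + K) := ht
      rw [ht']
      have : (2 * η)⁻¹ * (N * (p J - p (J + K))) ≤ (2 * η)⁻¹ * (N * p J) := by
        gcongr; linarith [hpn (J + K)]
      linarith
    have hbd : |E (f (J + K) * f (J + K)) - E (f J * f J)| ≤ p J := by
      have h1 := hE J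
      have h2 := hE (J + K)
      have h3 := hanti (Nat.le_add_right J K)
      rw [abs_le]; constructor <;> linarith
    rw [hcomp, Finsupp.mapDomain_smul, map_smul, map_smul, Finsupp.mapDomain_finsetSum, map_sum,
      map_sum, smul_eq_mul, smul_eq_mul, ← mul_sub, hdec, abs_mul, abs_of_pos (inv_pos.2 hZ0),
      inv_mul_le_iff₀ hZ0]
    refine (abs_add_le _ _).trans ((add_le_add hsum hbd).trans ?_)
    have h5 : (4 / δ * (2 * N / δ + 1)) * (p J / 2) ≤ Z :=
      (mul_le_mul_of_nonneg_right hK (by positivity)).trans hZK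
    have h6 : (2 * η)⁻¹ * (N * p J) + p J = δ / 2 * ((4 / δ * (2 * N / δ + 1)) * (p J / 2)) := by
      rw [hη]; field_simp; ring
    have h7 := mul_le_mul_of_nonneg_left h5 (by positivity : 0 ≤ δ / 2)
    rw [hη] at *
    nlinarith
end walk

/-! ### Counting coincidences of words -/

section words
variable {X : Type} {M : Type*} [Fintype X]

/-- Prepending a letter to a word, as an embedding. -/
def consEmb (X : Type) : X × List X ↪ List X where
  toFun p := p.1 :: p.2
  inj' p q h := by simpa [Prod.ext_iff] using h

omit [Fintype X] in
theorem consEmb_apply (p : X × List X) : consEmb X p = p.1 :: p.2 := rfl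

/-- The words of length `k`, the empty word included for `k = 0`. -/
noncomputable def wordsOfLength (X : Type) [Fintype X] : ℕ → Finset (List X)
  | 0 => {[]}
  | k + 1 => (Finset.univ ×ˢ wordsOfLength X k).map
      (consEmb X)

theorem mem_wordsOfLength (k : ℕ) (l : List X) : l ∈ wordsOfLength X k ↔ l.length = k := by
  induction k generalizing l with
  | zero => simp [wordsOfLength]
  | succ k ih =>
    cases l with
    | nil => simp [wordsOfLength, consEmb_apply]
    | cons x l => simp [wordsOfLength, consEmb_apply, ih]

theorem walk_eq (act : X → M → M) (o : M) (k : ℕ) :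
    walk act o k = ((Fintype.card X : ℝ) ^ k)⁻¹ •
      ∑ l ∈ wordsOfLength X k, Finsupp.single (l.foldr act o) (1 : ℝ) := by
  induction k with
  | zero => simp [walk, wordsOfLength]
  | succ k ih =>
    simp only [walk, ih, wordsOfLength, Finset.sum_map, Finset.sum_product,
      Finsupp.mapDomain_smul, Finsupp.mapDomain_finsetSum, Finsupp.mapDomain_single,
      consEmb_apply, List.foldr_cons]
    rw [← Finset.smul_sum, smul_smul, pow_succ, mul_inv, mul_comm]

theorem smul_mul_smul_finsupp (a b : ℝ) (f g : M →₀ ℝ) :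
    (a • f) * (b • g) = (a * b) • (f * g) := by
  ext m
  simp only [Finsupp.mul_apply, Finsupp.smul_apply, smul_eq_mul]
  ring

open Classical in
/-- The number of pairs of words of lengths `k` and `l` moving `o` to the same point is, up to
normalisation, the inner product of the walk distributions at times `k` and `l`. -/
theorem card_coincidences [Nonempty X] (act : X → M → M) (o : M) (k l : ℕ) :
    (((wordsOfLength X k ×ˢ wordsOfLength X l).filter
      (fun p => p.1.foldr act o = p.2.foldr act o)).card : ℝ) =
    (Fintype.card X : ℝ) ^ (k + l) * total (walk act o k * walk act o l) := by
  have hc : (Fintype.card X : ℝ) ≠ 0 := by simp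
  rw [walk_eq, walk_eq, smul_mul_smul_finsupp, map_smul, Finset.sum_mul_sum, map_sum,
    smul_eq_mul, ← mul_assoc, ← mul_inv, ← pow_add, mul_inv_cancel₀ (pow_ne_zero _ hc), one_mul,
    Finset.card_filter, Finset.sum_product]
  push_cast
  refine Finset.sum_congr rfl fun u _ => ?_
  rw [map_sum]
  refine Finset.sum_congr rfl fun v _ => ?_
  split_ifs with h
  · rw [h, ← Finsupp.single_mul]; simp [total]
  · have : Finsupp.single (u.foldr act o) (1 : ℝ) * Finsupp.single (v.foldr act o) (1 : ℝ) = 0 := by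
      ext m
      by_cases hm : u.foldr act o = m
      · subst hm
        simp [Ne.symm h]
      · simp [Finsupp.single_apply, hm]
    rw [this, map_zero]

theorem total_mul_le {act : X → M → M} {o : M} {r : ℝ} (hr : 0 < r)
    (h : ∀ j, collision act o j ≤ 2 * r ^ (2 * j)) (k l : ℕ) :
    total (walk act o k * walk act o l) ≤ 2 * r ^ (k + l) := by
  set f := walk act o k with hf
  set g := walk act o l with hg
  have ha : 0 < r ^ k := by positivity
  have hb : 0 < r ^ l := by positivity
  have hk := h k
  have hl := h l
  rw [mul_comm 2 k, pow_mul] at hk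
  rw [mul_comm 2 l, pow_mul] at hl
  rw [pow_add]
  set a := r ^ k
  set b := r ^ l
  have := lc_mono (φ := fun _ => (1 : ℝ)) (ψ := fun _ => (1 : ℝ)) (a := f * g)
    (b := (b / (2 * a)) • (f * f) + (a / (2 * b)) • (g * g)) (fun m => by
      simp only [Finsupp.mul_apply, Finsupp.add_apply, Finsupp.smul_apply, smul_eq_mul, mul_one]
      have e : b / (2 * a) * (f m * f m) + a / (2 * b) * (g m * g m) - f m * g m =
        (b * f m - a * g m) ^ 2 / (2 * a * b) := by
        field_simp; ring
      have : 0 ≤ (b * f m - a * g m) ^ 2 / (2 * a * b) := by positivity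
      linarith)
  change total (f * g) ≤ total _ at this
  rw [map_add, map_smul, map_smul, smul_eq_mul, smul_eq_mul] at this
  change collision act o k ≤ _ at hk
  have h1 : b / (2 * a) * total (f * f) ≤ b / (2 * a) * (2 * a ^ 2) :=
    mul_le_mul_of_nonneg_left hk (by positivity)
  have h2 : a / (2 * b) * total (g * g) ≤ a / (2 * b) * (2 * b ^ 2) :=
    mul_le_mul_of_nonneg_left hl (by positivity)
  have h3 : b / (2 * a) * (2 * a ^ 2) = a * b := by field_simp
  have h4 : a / (2 * b) * (2 * b ^ 2) = a * b := by field_simp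
  linarith

variable {S : Type*} [Semigroup S]

/-- Exponential decay of the collision probabilities bounds the cogrowth function; the factor
`n + 1` counts the possible lengths of the first word. -/
theorem gammaFn_le [Nonempty X] (π : FreeSemigroup X →ₙ* S) {act : X → M → M} {o : M}
    (hact : ∀ u v : FreeSemigroup X, π u = π v →
      (u.head :: u.tail).foldr act o = (v.head :: v.tail).foldr act o)
    {r : ℝ} (hr : 0 < r) (h : ∀ j, collision act o j ≤ 2 * r ^ (2 * j)) (n : ℕ) :
    (gammaFn π n : ℝ) ≤ (n + 1) * ((Fintype.card X : ℝ) ^ n * (2 * r ^ n)) := by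
  classical
  set P : ℕ → Finset (List X × List X) := fun k =>
    (wordsOfLength X k ×ˢ wordsOfLength X (n - k)).filter
      (fun p => p.1.foldr act o = p.2.foldr act o) with hP
  have hcard : gammaFn π n ≤ ((Finset.range (n + 1)).biUnion P).card := by
    rw [gammaFn, ← Fintype.card_coe, ← Nat.card_eq_fintype_card]
    refine Nat.card_le_card_of_injective
      (fun p => ⟨(p.1.1.head :: p.1.1.tail, p.1.2.head :: p.1.2.tail), ?_⟩) ?_
    · obtain ⟨⟨u, v⟩, hn, huv⟩ := p
      simp only [FreeSemigroup.length] at hn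
      simp only [hP, Finset.mem_biUnion, Finset.mem_range, Finset.mem_filter, Finset.mem_product,
        mem_wordsOfLength, List.length_cons]
      exact ⟨u.tail.length + 1, by omega, ⟨rfl, by omega⟩, hact u v huv⟩
    · rintro ⟨⟨⟨a, b⟩, ⟨c, d⟩⟩, _⟩ ⟨⟨⟨a', b'⟩, ⟨c', d'⟩⟩, _⟩ he
      simp only [Subtype.mk.injEq, Prod.mk.injEq, List.cons.injEq] at he
      obtain ⟨⟨rfl, rfl⟩, rfl, rfl⟩ := he
      rfl
  have hle : (gammaFn π n : ℝ) ≤ ∑ k ∈ Finset.range (n + 1), ((P k).card : ℝ) := by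
    exact_mod_cast hcard.trans Finset.card_biUnion_le
  refine hle.trans ((Finset.sum_le_sum (g := fun _ => (Fintype.card X : ℝ) ^ n * (2 * r ^ n))
    fun k hk => ?_).trans (by simp))
  have hk' : k + (n - k) = n := by have := Finset.mem_range.1 hk; omega
  have h1 := card_coincidences act o k (n - k)
  have h2 := total_mul_le hr h k (n - k)
  rw [hk'] at h1 h2
  rw [hP]
  dsimp only
  calc _ = _ := by convert h1
    _ ≤ _ := mul_le_mul_of_nonneg_left h2 (by positivity)

theorem not_decay [Nonempty X] (π : FreeSemigroup X →ₙ* S) {act : X → M → M} {o : M}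
    (hact : ∀ u v : FreeSemigroup X, π u = π v →
      (u.head :: u.tail).foldr act o = (v.head :: v.tail).foldr act o)
    (hmax : gammaRate π = Fintype.card X) :
    ¬ ∃ r : ℝ, 0 < r ∧ r < 1 ∧ ∀ j, collision act o j ≤ 2 * r ^ (2 * j) := by
  rintro ⟨r, r0, r1, h⟩
  set N : ℝ := (Fintype.card X : ℝ) with hN
  have hN0 : 0 < N := by simp [hN, Fintype.card_pos]
  obtain ⟨q, hq1, hq2⟩ := exists_between r1
  have q0 : 0 < q := r0.trans hq1
  have hlim : Tendsto (fun n : ℕ => 2 * ((n : ℝ) * (r / q) ^ n + (r / q) ^ n)) atTop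
      (nhds (2 * (0 + 0))) :=
    ((tendsto_self_mul_const_pow_of_lt_one (by positivity) ((div_lt_one q0).2 hq1)).add
      (tendsto_pow_atTop_nhds_zero_of_lt_one (by positivity) ((div_lt_one q0).2 hq1))).const_mul 2
  have hev : ∀ᶠ n : ℕ in atTop, (gammaFn π n : ℝ) ^ (1 / (n : ℝ)) ≤ N * q := by
    filter_upwards [hlim.eventually_lt_const (show 2 * (0 + 0) < (1 : ℝ) by norm_num),
      eventually_gt_atTop 0] with n hn hn0
    have hb : (gammaFn π n : ℝ) ≤ (N * q) ^ n := by
      refine (gammaFn_le π hact r0 h n).trans ?_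
      have e : (n + 1) * (N ^ n * (2 * r ^ n)) =
          (2 * ((n : ℝ) * (r / q) ^ n + (r / q) ^ n)) * (N * q) ^ n := by
        rw [div_pow, mul_pow]; field_simp
      rw [e]
      exact mul_le_of_le_one_left (by positivity) hn.le
    calc _ ≤ ((N * q) ^ n) ^ (1 / (n : ℝ)) :=
          Real.rpow_le_rpow (by positivity) hb (by positivity)
      _ = N * q := by
          rw [one_div]; exact Real.pow_rpow_inv_natCast (by positivity) hn0.ne'
  have hle : gammaRate π ≤ N * q := by
    refine limsup_le_of_le ?_ hev
    exact (isBoundedUnder_of ⟨0, fun n => by positivity⟩ :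
      IsBoundedUnder (· ≥ ·) atTop _).isCoboundedUnder_le
  rw [hmax] at hle
  have := mul_lt_of_lt_one_right hN0 hq2
  linarith

/-! ### The left cancellative quotient of `S¹` -/

theorem exists_common_multiple (hrev : IsLeftReversible S) (a b : WithOne S) :
    ∃ u v : WithOne S, a * u = b * v := by
  cases a with
  | one => exact ⟨b, 1, by simp⟩
  | coe a =>
    cases b with
    | one => exact ⟨1, a, by simp⟩
    | coe b => exact hrev a b

/-- The relation on `S¹` identifying `a` and `b` when `a * t = b * t` for some `t`; left
reversibility makes it transitive. -/
def eventualSetoid (hrev : IsLeftReversible S) : Setoid (WithOne S) where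
  r a b := ∃ t, a * t = b * t
  iseqv := ⟨fun _ => ⟨1, rfl⟩, fun ⟨t, h⟩ => ⟨t, h.symm⟩, by
    rintro a b c ⟨t, h⟩ ⟨t', h'⟩
    obtain ⟨u, v, huv⟩ := exists_common_multiple hrev t t'
    refine ⟨t * u, ?_⟩
    rw [← mul_assoc, h, mul_assoc, huv, ← mul_assoc, h', mul_assoc]⟩

/-- Finitely many equivalences in `eventualSetoid` are witnessed by one common `t`. -/
theorem exists_common_equalizer (hrev : IsLeftReversible S) {ι : Type*} (F : Finset ι)
    (a b : ι → WithOne S) (h : ∀ i ∈ F, ∃ t, a i * t = b i * t) :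
    ∃ t, ∀ i ∈ F, a i * t = b i * t := by
  classical
  induction F using Finset.induction_on with
  | empty => exact ⟨1, by simp⟩
  | insert i F _ ih =>
    obtain ⟨t, ht⟩ := ih fun j hj => h j (Finset.mem_insert_of_mem hj)
    obtain ⟨t', ht'⟩ := h i (Finset.mem_insert_self i F)
    obtain ⟨u, v, huv⟩ := exists_common_multiple hrev t t'
    refine ⟨t * u, fun j hj => ?_⟩
    rcases Finset.mem_insert.1 hj with rfl | hj
    · rw [huv, ← mul_assoc, ht', mul_assoc]
    · rw [← mul_assoc, ht j hj, mul_assoc]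

/-- Left multiplication by the generator `x` on the quotient of `S¹` by `eventualSetoid`. -/
def leftAct (hrev : IsLeftReversible S) (π : FreeSemigroup X →ₙ* S) (x : X) :
    Quotient (eventualSetoid hrev) → Quotient (eventualSetoid hrev) :=
  Quotient.map (fun a => (π (FreeSemigroup.of x) : WithOne S) * a) (by
    rintro a b ⟨t, h⟩
    exact ⟨t, by simp only [mul_assoc, h]⟩)

omit [Fintype X] in
/-- This is the Klawe condition passed to the quotient. -/
theorem leftAct_injective (hrev : IsLeftReversible S) (hK : KlaweCondition S)
    (π : FreeSemigroup X →ₙ* S) (x : X) : Function.Injective (leftAct hrev π x) := by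
  intro a b
  induction a using Quotient.inductionOn
  induction b using Quotient.inductionOn
  rename_i a b
  intro h
  obtain ⟨t, ht⟩ := Quotient.exact h
  rw [mul_assoc, mul_assoc] at ht
  obtain ⟨t', ht'⟩ := hK _ _ _ ht
  exact Quotient.sound ⟨t * t', by rw [← mul_assoc, ← mul_assoc, ht']⟩

omit [Fintype X] in
theorem foldr_leftAct (hrev : IsLeftReversible S) (π : FreeSemigroup X →ₙ* S)
    (u : FreeSemigroup X) :
    (u.head :: u.tail).foldr (leftAct hrev π) (Quotient.mk (eventualSetoid hrev) 1) =
      Quotient.mk (eventualSetoid hrev) (π u : WithOne S) := by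
  induction u using FreeSemigroup.recOnMul with
  | ih1 x => simp [leftAct, Quotient.map_mk]
  | ih2 x u _ ih =>
    have e : ((FreeSemigroup.of x * u).head :: (FreeSemigroup.of x * u).tail) =
      x :: (u.head :: u.tail) := rfl
    rw [e, List.foldr_cons, ih, map_mul, WithOne.coe_mul]
    rfl

/-- Almost invariant finitely supported means on `S`. A mean `d` on the quotient is lifted along
`m ↦ m.out * t`, where `t` is chosen so that this lift commutes with the generators on the finite
support of `d`. -/
theorem exists_approx_mean [Nonempty X] (π : FreeSemigroup X →ₙ* S) (hrev : IsLeftReversible S)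
    (hK : KlaweCondition S) (hmax : gammaRate π = Fintype.card X) {δ : ℝ} (hδ : 0 < δ) :
    ∃ D : Set S → ℝ, (∀ A, 0 ≤ D A ∧ D A ≤ 1) ∧ D Set.univ = 1 ∧
      (∀ A B, Disjoint A B → D (A ∪ B) = D A + D B) ∧
      ∀ x A, |D {s | π (FreeSemigroup.of x) * s ∈ A} - D A| ≤ δ := by
  classical
  obtain ⟨d, hd0, hd1, hd⟩ := exists_almost_invariant (leftAct_injective hrev hK π)
    (Quotient.mk (eventualSetoid hrev) 1)
    (not_decay π (fun u v h => by rw [foldr_leftAct, foldr_leftAct, h]) hmax) hδ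
  obtain ⟨t, ht⟩ := exists_common_equalizer hrev ((Finset.univ : Finset X) ×ˢ d.support)
    (fun i => (π (FreeSemigroup.of i.1) : WithOne S) * i.2.out)
    (fun i => (leftAct hrev π i.1 i.2).out) (fun i _ => by
      refine Quotient.exact (s := eventualSetoid hrev) ?_
      rw [Quotient.out_eq]
      conv_rhs => rw [← Quotient.out_eq i.2]
      rfl)
  -- A further factor from `S` on the right keeps the lift inside `S` rather than `S¹`.
  obtain ⟨x₀⟩ := ‹Nonempty X›
  have hcoe : ∀ w : WithOne S, ∃ s : S, (s : WithOne S) = w * π (FreeSemigroup.of x₀) := by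
    intro w
    cases w with
    | one => exact ⟨_, (one_mul _).symm⟩
    | coe w => exact ⟨_, WithOne.coe_mul _ _⟩
  choose τ hτ using fun m : Quotient (eventualSetoid hrev) => hcoe (m.out * t)
  have hτx : ∀ x, ∀ m ∈ d.support, π (FreeSemigroup.of x) * τ m = τ (leftAct hrev π x m) := by
    intro x m hm
    apply WithOne.coe_injective
    rw [WithOne.coe_mul, hτ, hτ, ← ht (x, m) (by simpa using hm)]
    simp only [mul_assoc]
  set φ : Set S → Quotient (eventualSetoid hrev) → ℝ := fun A m => if τ m ∈ A then 1 else 0 with hφ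
  have hφ01 : ∀ A m, 0 ≤ φ A m ∧ φ A m ≤ 1 := fun A m => by
    simp only [hφ]; split_ifs <;> norm_num
  refine ⟨fun A => Finsupp.linearCombination ℝ (φ A) d, fun A => ⟨?_, ?_⟩, ?_, ?_, ?_⟩
  · have := lc_mono (φ := φ A) (ψ := φ A) (a := 0) (b := d) (fun m => by
      simpa using mul_nonneg (hd0 m) (hφ01 A m).1)
    simpa using this
  · rw [← hd1]
    exact lc_mono (fun m => mul_le_mul_of_nonneg_left (hφ01 A m).2 (hd0 m))
  · rw [← hd1]; simp [hφ, total]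
  · intro A B hAB
    simp only [Finsupp.linearCombination_apply, Finsupp.sum, ← Finset.sum_add_distrib,
      smul_eq_mul, ← mul_add]
    refine Finset.sum_congr rfl fun m _ => ?_
    congr 1
    have : τ m ∈ A → τ m ∉ B := fun h => Set.disjoint_left.1 hAB h
    simp only [hφ, Set.mem_union]
    by_cases hA : τ m ∈ A
    · simp [hA, this hA]
    · simp [hA]
  · intro x A
    have e : Finsupp.linearCombination ℝ (φ {s | π (FreeSemigroup.of x) * s ∈ A}) d =
        Finsupp.linearCombination ℝ (φ A ∘ leftAct hrev π x) d := by
      simp only [Finsupp.linearCombination_apply, Finsupp.sum]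
      refine Finset.sum_congr rfl fun m hm => ?_
      simp only [hφ, Function.comp, Set.mem_ofPred_eq, hτx x m hm]
    dsimp only
    rw [e]
    exact hd (φ A) (hφ01 A) x
end words

/-! ### Passing to the limit -/

theorem stmt10 {X : Type} {S : Type*} [Semigroup S] [Fintype X] [Nonempty X]
    (π : FreeSemigroup X →ₙ* S) (hπ : Function.Surjective π)
    (hrev : IsLeftReversible S) (hKlawe : KlaweCondition S)
    (hmax : gammaRate π = Fintype.card X) :
    IsLeftAmenable S := by
  choose D hD01 hD1 hDadd hDinv using fun n : ℕ =>
    exists_approx_mean π hrev hKlawe hmax (Nat.one_div_pos_of_nat (n := n) (α := ℝ))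
  have hconv : ∀ A, ∃ y ∈ Set.Icc (0 : ℝ) 1,
      Tendsto (fun n => D n A) (hyperfilter ℕ : Filter ℕ) (nhds y) := by
    intro A
    have := isCompact_Icc.ultrafilter_le_nhds' (s := Set.Icc (0 : ℝ) 1)
      ((hyperfilter ℕ).map fun n => D n A) (by
        rw [Ultrafilter.mem_map]
        exact Filter.univ_mem' fun n => hD01 n A)
    exact this
  choose μ hμ01 hμ using hconv
  have hgen : ∀ x T, μ {s | π (FreeSemigroup.of x) * s ∈ T} = μ T := by
    intro x T
    have h0 : Tendsto (fun n : ℕ => 1 / ((n : ℝ) + 1)) (hyperfilter ℕ : Filter ℕ) (nhds 0) :=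
      tendsto_one_div_add_atTop_nhds_zero_nat.mono_left Nat.hyperfilter_le_atTop
    have h1 := squeeze_zero_norm (f := fun n =>
      D n {s | π (FreeSemigroup.of x) * s ∈ T} - D n T) (fun n => hDinv n x T) h0
    have h2 := tendsto_nhds_unique h1 ((hμ _).sub (hμ T))
    linarith
  refine ⟨μ, hμ01, ?_, fun A B hAB => ?_, fun a => ?_⟩
  · exact tendsto_nhds_unique (hμ Set.univ) (by simp [hD1])
  · refine tendsto_nhds_unique (hμ (A ∪ B)) ?_
    simpa only [hDadd _ A B hAB] using (hμ A).add (hμ B)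
  · obtain ⟨w, rfl⟩ := hπ a
    induction w using FreeSemigroup.recOnMul with
    | ih1 x => exact hgen x
    | ih2 x w hx hw =>
      intro T
      have e : {s | π (FreeSemigroup.of x * w) * s ∈ T} =
          {s | π w * s ∈ {s | π (FreeSemigroup.of x) * s ∈ T}} := by
        ext s; simp [mul_assoc]
      rw [e, hw, hgen]
end

section
/- Let S be a semigroup with a finite choice of generators X via π : X⁺ → S. If s, t ∈ S satisfy s ≤_J t (i.e. there exist u, v ∈ S¹ with u·t·v = s), then λ_s ≥ λ_t. In particular the local cogrowth rate is constant on 𝒥-classes, and if S is simple then the local cogrowth rate is constant across S. -/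
/-!
If `u * t * v = s` with `u, v ∈ S¹`, choose words (possibly empty) representing `u` and `v`, of total
length `k`. Multiplying by them on the left and right maps the words of length `n` representing `t`
injectively to words of length `n + k` representing `s`, so `λ_t(n) ≤ λ_s(n + k)`
(`lambdaFn_le_of_leJ`). If `c > λ_s`, then eventually `λ_s(n) ≤ c ^ n`, hence
`λ_t(n) ^ (1 / n) ≤ c ^ ((n + k) / n) → c`, and so `λ_t ≤ c` (`lambdaRate_le_of_shift`). The
limsups are genuine because `λ_s(n) ≤ |X| ^ n`.
In a simple semigroup, the set of `s` with `s ≤_J t` is an ideal, hence everything.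
-/

open Filter

/-- The local cogrowth function at `s`. -/
noncomputable def lambdaFn {X : Type} {S : Type*} [Mul S]
    (π : FreeSemigroup X →ₙ* S) (s : S) (n : ℕ) : ℕ :=
  Nat.card {w : FreeSemigroup X // w.length = n ∧ π w = s}

/-- The local cogrowth rate at `s`. -/
noncomputable def lambdaRate {X : Type} {S : Type*} [Mul S]
    (π : FreeSemigroup X →ₙ* S) (s : S) : ℝ :=
  Filter.atTop.limsup (fun n : ℕ => (lambdaFn π s n : ℝ) ^ (1 / (n : ℝ)))

/-- Green's `≤_J` preorder: `s ≤_J t` iff `s = u·t·v` for some `u, v ∈ S¹`. -/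
def leJ {S : Type*} [Semigroup S] (s t : S) : Prop :=
  ∃ u v : WithOne S, u * (t : WithOne S) * v = (s : WithOne S)

/-- An ideal of a semigroup. -/
def IsIdeal {S : Type*} [Semigroup S] (I : Set S) : Prop :=
  I.Nonempty ∧ ∀ a ∈ I, ∀ x : S, x * a ∈ I ∧ a * x ∈ I

/-- A simple semigroup: `S` is its only ideal. -/
def IsSimpleSemigroup (S : Type*) [Semigroup S] : Prop :=
  ∀ I : Set S, IsIdeal I → I = Set.univ

/-- The word `w`, representing `s` and of length `n`, as the vector of its `n` letters. -/
def fiberToVector {X : Type} {S : Type*} [Mul S] (π : FreeSemigroup X →ₙ* S) (s : S) (n : ℕ)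
    (w : {w : FreeSemigroup X // w.length = n ∧ π w = s}) : List.Vector X n :=
  ⟨w.1.head :: w.1.tail, w.2.1⟩

theorem fiberToVector_injective {X : Type} {S : Type*} [Mul S]
    (π : FreeSemigroup X →ₙ* S) (s : S) (n : ℕ) :
    Function.Injective (fiberToVector π s n) := by
  rintro ⟨a, ha⟩ ⟨b, hb⟩ h
  have h := congrArg Subtype.val h
  simp only [fiberToVector, List.cons.injEq] at h
  exact Subtype.ext (FreeSemigroup.ext h.1 h.2)

theorem finite_fiber {X : Type} {S : Type*} [Mul S] [Fintype X]
    (π : FreeSemigroup X →ₙ* S) (s : S) (n : ℕ) :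
    Finite {w : FreeSemigroup X // w.length = n ∧ π w = s} :=
  Finite.of_injective _ (fiberToVector_injective π s n)

theorem lambdaFn_le_card_pow {X : Type} {S : Type*} [Mul S] [Fintype X]
    (π : FreeSemigroup X →ₙ* S) (s : S) (n : ℕ) :
    lambdaFn π s n ≤ Fintype.card X ^ n := by
  rw [← card_vector (α := X) n, ← Nat.card_eq_fintype_card]
  exact Nat.card_le_card_of_injective _ (fiberToVector_injective π s n)

theorem lambdaFn_le_mul_left {X : Type} {S : Type*} [Mul S] [Fintype X]
    (π : FreeSemigroup X →ₙ* S) (p : FreeSemigroup X) (t : S) (n : ℕ) :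
    lambdaFn π t n ≤ lambdaFn π (π p * t) (n + p.length) := by
  have := finite_fiber π (π p * t) (n + p.length)
  refine Nat.card_le_card_of_injective
    (fun w => ⟨p * w.1, by rw [FreeSemigroup.length_mul, w.2.1, add_comm],
      by rw [map_mul, w.2.2]⟩) ?_
  rintro ⟨⟨a, a'⟩, ha⟩ ⟨⟨b, b'⟩, hb⟩ h
  have h := congrArg FreeSemigroup.tail (congrArg Subtype.val h)
  simpa [FreeSemigroup.tail_mul] using h

theorem lambdaFn_le_mul_right {X : Type} {S : Type*} [Mul S] [Fintype X]
    (π : FreeSemigroup X →ₙ* S) (q : FreeSemigroup X) (t : S) (n : ℕ) :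
    lambdaFn π t n ≤ lambdaFn π (t * π q) (n + q.length) := by
  have := finite_fiber π (t * π q) (n + q.length)
  refine Nat.card_le_card_of_injective
    (fun w => ⟨w.1 * q, by rw [FreeSemigroup.length_mul, w.2.1],
      by rw [map_mul, w.2.2]⟩) ?_
  rintro ⟨⟨a, a'⟩, ha⟩ ⟨⟨b, b'⟩, hb⟩ h
  have h1 := congrArg FreeSemigroup.head (congrArg Subtype.val h)
  have h2 := congrArg FreeSemigroup.tail (congrArg Subtype.val h)
  simp [FreeSemigroup.tail_mul, FreeSemigroup.head_mul] at h1 h2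
  simp [h1, h2]

/-- The shift `k` is the total length of words representing the two multipliers in `S¹`,
an adjoined identity contributing length zero. -/
theorem lambdaFn_le_of_leJ {X : Type} {S : Type*} [Semigroup S] [Fintype X]
    (π : FreeSemigroup X →ₙ* S) (hπ : Function.Surjective π) {s t : S} (h : leJ s t) :
    ∃ k : ℕ, ∀ n, lambdaFn π t n ≤ lambdaFn π s (n + k) := by
  have left : ∀ u : WithOne S, ∃ r : S, u * (t : WithOne S) = (r : WithOne S) ∧
      ∃ k, ∀ n, lambdaFn π t n ≤ lambdaFn π r (n + k) := by
    intro u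
    cases u with
    | one => exact ⟨t, one_mul _, 0, fun n => le_rfl⟩
    | coe a =>
      obtain ⟨p, rfl⟩ := hπ a
      exact ⟨π p * t, (WithOne.coe_mul _ _).symm, p.length, lambdaFn_le_mul_left π p t⟩
  obtain ⟨u, v, huv⟩ := h
  obtain ⟨r, hr, k, hk⟩ := left u
  rw [hr] at huv
  cases v with
  | one =>
    rw [mul_one, WithOne.coe_inj] at huv
    exact ⟨k, huv ▸ hk⟩
  | coe b =>
    obtain ⟨q, rfl⟩ := hπ b
    rw [← WithOne.coe_mul, WithOne.coe_inj] at huv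
    refine ⟨k + q.length, fun n => (hk n).trans ?_⟩
    rw [← huv, ← add_assoc]
    exact lambdaFn_le_mul_right π q r (n + k)

theorem isBoundedUnder_rate {X : Type} {S : Type*} [Mul S] [Fintype X]
    (π : FreeSemigroup X →ₙ* S) (s : S) :
    IsBoundedUnder (· ≤ ·) atTop (fun n : ℕ => (lambdaFn π s n : ℝ) ^ (1 / (n : ℝ))) := by
  refine isBoundedUnder_of_eventually_le (a := (Fintype.card X : ℝ)) ?_
  filter_upwards [eventually_ge_atTop 1] with n hn
  rw [one_div]
  rw [Real.rpow_inv_le_iff_of_pos (by positivity) (by positivity) (by exact_mod_cast hn),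
    Real.rpow_natCast]
  exact_mod_cast lambdaFn_le_card_pow π s n

theorem isCoboundedUnder_rate {X : Type} {S : Type*} [Mul S]
    (π : FreeSemigroup X →ₙ* S) (s : S) :
    IsCoboundedUnder (· ≤ ·) atTop (fun n : ℕ => (lambdaFn π s n : ℝ) ^ (1 / (n : ℝ))) :=
  isCoboundedUnder_le_of_le atTop (x := 0) fun n => by positivity

theorem lambdaRate_le_of_shift {X : Type} {S : Type*} [Mul S] [Fintype X]
    (π : FreeSemigroup X →ₙ* S) {s t : S} {k : ℕ}
    (hk : ∀ n, lambdaFn π t n ≤ lambdaFn π s (n + k)) :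
    lambdaRate π t ≤ lambdaRate π s := by
  refine le_of_forall_gt_imp_ge_of_dense fun c hc => ?_
  have hev := eventually_lt_of_limsup_lt hc (isBoundedUnder_rate π s)
  have hc0 : 0 < c := by
    obtain ⟨n, hn⟩ := hev.exists
    exact lt_of_le_of_lt (by positivity) hn
  have hexp : Tendsto (fun n : ℕ => c ^ (1 + (k : ℝ) / (n : ℝ))) atTop (nhds c) := by
    have h1 : Tendsto (fun n : ℕ => 1 + (k : ℝ) / (n : ℝ)) atTop (nhds 1) := by
      simpa using (tendsto_const_div_atTop_nhds_zero_nat (k : ℝ)).const_add 1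
    simpa using tendsto_const_nhds.rpow h1 (Or.inl hc0.ne')
  rw [← hexp.limsup_eq]
  refine limsup_le_limsup ?_ (isCoboundedUnder_rate π t) hexp.isBoundedUnder_le
  filter_upwards [(tendsto_add_atTop_nat k).eventually hev, eventually_ge_atTop 1] with n hn hn1
  have hn0 : (0 : ℝ) < n := by exact_mod_cast hn1
  have h1 : (lambdaFn π s (n + k) : ℝ) ≤ c ^ (((n + k : ℕ)) : ℝ) := by
    rw [one_div] at hn
    exact (Real.rpow_inv_le_iff_of_pos (by positivity) hc0.le
      (by exact_mod_cast (by omega : 0 < n + k))).1 hn.le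
  calc (lambdaFn π t n : ℝ) ^ (1 / (n : ℝ))
      ≤ (c ^ (((n + k : ℕ)) : ℝ)) ^ (1 / (n : ℝ)) := by
        refine Real.rpow_le_rpow (by positivity) (le_trans ?_ h1) (by positivity)
        exact_mod_cast hk n
    _ = c ^ (1 + (k : ℝ) / (n : ℝ)) := by
        rw [← Real.rpow_mul hc0.le]
        congr 1
        push_cast
        field_simp

theorem isIdeal_leJ {S : Type*} [Semigroup S] (t : S) : IsIdeal {s : S | leJ s t} := by
  refine ⟨⟨t, 1, 1, by simp⟩, ?_⟩
  rintro a ⟨u, v, h⟩ x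
  refine ⟨⟨x * u, v, ?_⟩, ⟨u, v * x, ?_⟩⟩
  · rw [WithOne.coe_mul, ← h]; simp only [mul_assoc]
  · rw [WithOne.coe_mul, ← h]; simp only [mul_assoc]

theorem stmt12 {X : Type} {S : Type*} [Semigroup S] [Fintype X] [Nonempty X]
    (π : FreeSemigroup X →ₙ* S) (hπ : Function.Surjective π) :
    (∀ s t : S, leJ s t → lambdaRate π t ≤ lambdaRate π s) ∧
    (∀ s t : S, leJ s t → leJ t s → lambdaRate π s = lambdaRate π t) ∧
    (IsSimpleSemigroup S → ∀ s t : S, lambdaRate π s = lambdaRate π t) := by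
  have mono : ∀ s t : S, leJ s t → lambdaRate π t ≤ lambdaRate π s := fun s t h =>
    let ⟨_, hk⟩ := lambdaFn_le_of_leJ π hπ h
    lambdaRate_le_of_shift π hk
  refine ⟨mono, fun s t hst hts => le_antisymm (mono t s hts) (mono s t hst), ?_⟩
  intro hS s t
  have all : ∀ s t : S, leJ s t := fun s t =>
    (Set.ext_iff.1 (hS _ (isIdeal_leJ t)) s).2 (Set.mem_univ s)
  exact le_antisymm (mono t s (all t s)) (mono s t (all s t))
end

section
/- Let S be a semigroup with a finite choice of generators X via π : X⁺ → S. If S has a finite minimal right ideal I, then every element of I has maximal local cogrowth: λ_i = |X| for all i ∈ I. -/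
/-!
Write `k = |X|`. A minimal right ideal `R` satisfies `r * S = R` for every `r ∈ R`, so any two of its
elements `r`, `i` are linked by some word `v` with `r * π v = i` (`exists_word_link`), and since `R` is
finite there are finitely many such words to choose for a given target `i`. Fix a word `u` with
`π u ∈ R`. Every word `u * w` lands in `R`, so by pigeonhole at least `k ^ n / |R|` of the words `w` of
length `n` have the same value `r = π (u * w)`; multiplying on the right by the word linking `r` to `i`
is injective, and gives at least `k ^ n / |R|` words with value `i` whose common length exceeds `n` by
a bounded amount. Hence `c * k ^ m ≤ lambdaFn π i m` for infinitely many `m`, with one constant `c > 0`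
(`frequently_mul_pow_le`). Since `lambdaFn π i m ≤ k ^ m` always holds and `c ^ (1 / m) → 1`, the
upper limit of the `m`-th roots is `k`.
-/

open Filter

/-- A right ideal of a semigroup. -/
def IsRightIdeal {S : Type*} [Semigroup S] (R : Set S) : Prop :=
  R.Nonempty ∧ ∀ r ∈ R, ∀ s : S, r * s ∈ R

section Words

variable {X : Type} {S : Type*}

/-- A nonempty word of length `n + 1` is its first letter followed by a list of `n` letters. -/
def wordEquiv (X : Type) (n : ℕ) :
    {w : FreeSemigroup X // w.length = n + 1} ≃ X × List.Vector X n where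
  toFun w := (w.1.head, ⟨w.1.tail, by have := w.2; simpa [FreeSemigroup.length] using this⟩)
  invFun p := ⟨⟨p.1, p.2.1⟩, by simp [FreeSemigroup.length]⟩
  left_inv _ := rfl
  right_inv _ := rfl

theorem finite_words [Finite X] (n : ℕ) : Finite {w : FreeSemigroup X // w.length = n} := by
  cases n with
  | zero =>
    have : IsEmpty {w : FreeSemigroup X // w.length = 0} :=
      ⟨fun w => by have := w.2; simp [FreeSemigroup.length] at this⟩
    infer_instance
  | succ n =>
    have := Fintype.ofFinite X
    exact Finite.of_equiv _ (wordEquiv X n).symm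

theorem card_words [Fintype X] (n : ℕ) :
    Nat.card {w : FreeSemigroup X // w.length = n + 1} = Fintype.card X ^ (n + 1) := by
  rw [Nat.card_congr (wordEquiv X n), Nat.card_eq_fintype_card, Fintype.card_prod, card_vector]
  ring

theorem word_mul_right_injective (v : FreeSemigroup X) :
    Function.Injective fun w : FreeSemigroup X => w * v := by
  rintro ⟨a, l⟩ ⟨b, m⟩ h
  obtain ⟨c, t⟩ := v
  have h' := FreeSemigroup.ext_iff.1 h
  simp only [FreeSemigroup.head_mul, FreeSemigroup.tail_mul, List.append_left_inj] at h'
  exact FreeSemigroup.ext h'.1 h'.2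

theorem lambdaFn_le [Fintype X] [Mul S] (π : FreeSemigroup X →ₙ* S) (s : S) (n : ℕ) :
    lambdaFn π s (n + 1) ≤ Fintype.card X ^ (n + 1) := by
  have := finite_words (X := X) (n + 1)
  rw [← card_words]
  exact Nat.card_le_card_of_injective
    (fun w : {w : FreeSemigroup X // w.length = n + 1 ∧ π w = s} =>
      (⟨w.1, w.2.1⟩ : {w : FreeSemigroup X // w.length = n + 1}))
    (fun a b h => Subtype.ext (Subtype.mk.inj h))

/-- By minimality `r * S = R`, so every `i ∈ R` is reached from `r ∈ R` by right multiplication. -/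
theorem exists_word_link [Semigroup S] (π : FreeSemigroup X →ₙ* S) (hπ : Function.Surjective π)
    {R : Set S} (hR : IsRightIdeal R)
    (hmin : ∀ R' : Set S, IsRightIdeal R' → R' ⊆ R → R' = R) {r i : S} (hr : r ∈ R) (hi : i ∈ R) :
    ∃ v : FreeSemigroup X, r * π v = i := by
  have hrS : Set.range (fun s => r * s) = R := by
    refine hmin _ ⟨⟨_, r, rfl⟩, ?_⟩ ?_
    · rintro _ ⟨s, rfl⟩ t
      exact ⟨s * t, (mul_assoc _ _ _).symm⟩
    · rintro _ ⟨s, rfl⟩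
      exact hR.2 r hr s
  obtain ⟨s, hs⟩ := hrS.symm ▸ hi
  obtain ⟨v, rfl⟩ := hπ s
  exact ⟨v, hs⟩

/-- Every element of a finite minimal right ideal receives, for infinitely many lengths `m`, at least
a fixed positive proportion of all words of length `m`. -/
theorem frequently_mul_pow_le [Semigroup S] [Fintype X] [Nonempty X]
    (π : FreeSemigroup X →ₙ* S) (hπ : Function.Surjective π)
    {R : Set S} (hR : IsRightIdeal R) (hfin : R.Finite)
    (hmin : ∀ R' : Set S, IsRightIdeal R' → R' ⊆ R → R' = R) {i : S} (hi : i ∈ R) :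
    ∃ c : ℝ, 0 < c ∧ ∃ᶠ m : ℕ in atTop, c * (Fintype.card X : ℝ) ^ m ≤ lambdaFn π i m := by
  classical
  have hk : (1 : ℝ) ≤ Fintype.card X := by exact_mod_cast Fintype.card_pos (α := X)
  obtain ⟨u, rfl⟩ := hπ i
  choose! v hv using fun r (hr : r ∈ R) => exists_word_link π hπ hR hmin hr hi
  set T : Finset S := hfin.toFinset with hT
  have hTpos : (0 : ℝ) < T.card := by
    exact_mod_cast Finset.card_pos.2 ⟨π u, hfin.mem_toFinset.2 hi⟩
  -- The word `u * w * v r` is longer than `w` by at most `C`.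
  set C : ℕ := u.length + T.sup fun r => (v r).length with hC
  refine ⟨((T.card : ℝ) * (Fintype.card X : ℝ) ^ C)⁻¹, by positivity, ?_⟩
  rw [frequently_atTop]
  intro n
  have := finite_words (X := X) (n + 1)
  have := Fintype.ofFinite {w : FreeSemigroup X // w.length = n + 1}
  obtain ⟨r, hrT, hr⟩ := Finset.exists_le_card_fiber_of_nsmul_le_card_of_maps_to
    (s := (Finset.univ : Finset {w : FreeSemigroup X // w.length = n + 1})) (t := T)
    (f := fun w => π (u * w.1)) (b := (Fintype.card X : ℝ) ^ (n + 1) / T.card)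
    (fun w _ => hfin.mem_toFinset.2 (by rw [map_mul]; exact hR.2 _ hi _))
    ⟨π u, hfin.mem_toFinset.2 hi⟩
    (by
      rw [nsmul_eq_mul, mul_div_cancel₀ _ hTpos.ne', Finset.card_univ,
        ← Nat.card_eq_fintype_card (α := {w : FreeSemigroup X // w.length = n + 1}), card_words]
      push_cast
      exact le_rfl)
  set m := u.length + (n + 1) + (v r).length with hm
  have hmC : m ≤ n + 1 + C := by
    have := Finset.le_sup (f := fun r => (v r).length) hrT
    omega
  refine ⟨m, by omega, ?_⟩
  clear_value C
  have hle : (Finset.univ.filter fun w : {w : FreeSemigroup X // w.length = n + 1} =>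
      π (u * w.1) = r).card ≤ lambdaFn π (π u) m := by
    have := finite_words (X := X) m
    have : Finite {w : FreeSemigroup X // w.length = m ∧ π w = π u} :=
      Finite.of_injective
        (fun w : {w : FreeSemigroup X // w.length = m ∧ π w = π u} =>
          (⟨w.1, w.2.1⟩ : {w : FreeSemigroup X // w.length = m}))
        (fun a b h => Subtype.ext (Subtype.mk.inj h))
    rw [← Fintype.card_coe, ← Nat.card_eq_fintype_card, lambdaFn]
    refine Nat.card_le_card_of_injective
      (fun w => ⟨u * w.1.1 * v r, ?_, ?_⟩) ?_
    · rw [FreeSemigroup.length_mul, FreeSemigroup.length_mul, w.1.2]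
    · rw [map_mul, (Finset.mem_filter.1 w.2).2, hv r (hfin.mem_toFinset.1 hrT)]
    · intro a b h
      have h1 : u * a.1.1 = u * b.1.1 :=
        word_mul_right_injective (v r) (congrArg Subtype.val h)
      have h2 := FreeSemigroup.ext_iff.1 h1
      simp only [FreeSemigroup.tail_mul, List.append_cancel_left_eq, List.cons.injEq] at h2
      exact Subtype.ext (Subtype.ext (FreeSemigroup.ext h2.2.1 h2.2.2))
  calc ((T.card : ℝ) * (Fintype.card X : ℝ) ^ C)⁻¹ * (Fintype.card X : ℝ) ^ m
      ≤ ((T.card : ℝ) * (Fintype.card X : ℝ) ^ C)⁻¹ * (Fintype.card X : ℝ) ^ (n + 1 + C) := by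
        gcongr
    _ = (Fintype.card X : ℝ) ^ (n + 1) / T.card := by
        rw [pow_add]
        field_simp
    _ ≤ _ := hr
    _ ≤ _ := by exact_mod_cast hle

end Words

theorem stmt15 {X : Type} {S : Type*} [Semigroup S] [Fintype X] [Nonempty X]
    (π : FreeSemigroup X →ₙ* S) (hπ : Function.Surjective π)
    (R : Set S) (hR : IsRightIdeal R) (hfin : R.Finite)
    (hmin : ∀ R' : Set S, IsRightIdeal R' → R' ⊆ R → R' = R) :
    ∀ i ∈ R, lambdaRate π i = Fintype.card X := by
  intro i hi
  obtain ⟨c, hc, hfreq⟩ := frequently_mul_pow_le π hπ hR hfin hmin hi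
  have hroot : ∀ m : ℕ, m ≠ 0 →
      ((Fintype.card X : ℝ) ^ m) ^ (1 / (m : ℝ)) = Fintype.card X := fun m hm => by
    rw [one_div, Real.pow_rpow_inv_natCast (Nat.cast_nonneg _) hm]
  have hupper : ∀ᶠ m : ℕ in atTop,
      (lambdaFn π i m : ℝ) ^ (1 / (m : ℝ)) ≤ Fintype.card X := by
    filter_upwards [eventually_ne_atTop 0] with m hm
    obtain ⟨n, rfl⟩ := Nat.exists_eq_succ_of_ne_zero hm
    rw [← hroot _ hm]
    gcongr
    exact_mod_cast lambdaFn_le π i n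
  have hlower : ∀ m : ℕ, 0 ≤ (lambdaFn π i m : ℝ) ^ (1 / (m : ℝ)) := fun m => by positivity
  apply le_antisymm
  · exact limsup_le_of_le (isCoboundedUnder_le_of_le atTop hlower) hupper
  · refine le_of_forall_lt_imp_le_of_dense fun b hb => ?_
    have hlim : Tendsto (fun m : ℕ => c ^ (1 / (m : ℝ)) * Fintype.card X) atTop
        (nhds (Fintype.card X)) := by
      have h := (tendsto_const_nhds (x := c)).rpow tendsto_one_div_atTop_nhds_zero_nat
        (Or.inl hc.ne')
      simpa using h.mul_const (Fintype.card X : ℝ)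
    refine le_limsup_of_frequently_le ?_ ⟨_, hupper⟩
    refine (hfreq.and_eventually ((hlim.eventually_const_lt hb).and
      (eventually_ne_atTop 0))).mono fun m ⟨h1, h2, hm⟩ => ?_
    calc b ≤ c ^ (1 / (m : ℝ)) * Fintype.card X := h2.le
      _ = (c * (Fintype.card X : ℝ) ^ m) ^ (1 / (m : ℝ)) := by
        rw [Real.mul_rpow hc.le (by positivity), hroot m hm]
      _ ≤ _ := by gcongr
end

section
/- Let G be a group with a finite symmetric choice of generators X via π : X⁺ → G. Then the global cogrowth rate equals the local cogrowth rate at every element: γ^{G,X} = λ^{G,X}_g for all g ∈ G. -/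
/-!
Let `I` be the formal inverse on words (reverse a word and apply the involution to each letter);
it preserves length, is an involution, and represents the inverse element. Then
`(u, v) ↦ u * I v` sends the pairs counted by `gammaFn π n` to the words counted by
`lambdaFn π 1 n`; it is injective once `|u|` is remembered, and surjective for `n ≥ 2`. Hence
`lambdaFn π 1 n ≤ gammaFn π n ≤ n * lambdaFn π 1 n` for `n ≥ 2` (`lambda_le_gamma`,
`gamma_le_lambda`). On the other hand, right multiplication by a fixed word for `b` gives
`lambdaFn π a n ≤ lambdaFn π (a * b) (n + c)` with `c` constant (`lambda_shift`). Neither a factor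
`n` nor a shift by a constant affects the exponential growth rate (`limsup_root_le`), the growth
being at most exponential with base `|X|`.
-/

open Filter

/-- The choice of generators `π` for the group `G` is symmetric: there is an involution
of `X` matching each generator with a generator representing the inverse element. -/
def IsSymmetricChoice {X : Type} {G : Type*} [Group G]
    (π : FreeSemigroup X →ₙ* G) : Prop :=
  ∃ σ : X → X, (∀ x, σ (σ x) = x) ∧
    ∀ x, π (FreeSemigroup.of (σ x)) = (π (FreeSemigroup.of x))⁻¹

theorem words_mul_inj {X : Type} {u v u' v' : FreeSemigroup X} (h : u * v = u' * v')
    (hl : u.length = u'.length) : u = u' ∧ v = v' := by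
  obtain ⟨a, s⟩ := u
  obtain ⟨b, t⟩ := v
  obtain ⟨a', s'⟩ := u'
  obtain ⟨b', t'⟩ := v'
  simp only [FreeSemigroup.mk_mul_mk, FreeSemigroup.mk.injEq, FreeSemigroup.length] at h hl ⊢
  obtain ⟨h1, h2⟩ := h
  obtain ⟨h3, h4⟩ := List.append_inj h2 (by omega)
  simp only [List.cons.injEq] at h4
  exact ⟨⟨h1, h3⟩, h4⟩

/-- A symmetric choice of generators yields a formal inverse on words. It is the anti-homomorphism
extending the involution of the alphabet. -/
theorem exists_formal_inverse {X : Type} {G : Type*} [Group G] (π : FreeSemigroup X →ₙ* G)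
    (hsym : IsSymmetricChoice π) :
    ∃ I : FreeSemigroup X → FreeSemigroup X, (∀ u, I (I u) = u) ∧
      (∀ u, (I u).length = u.length) ∧ ∀ u, π (I u) = (π u)⁻¹ := by
  obtain ⟨σ, hσ, hπσ⟩ := hsym
  let J : FreeSemigroup X →ₙ* (FreeSemigroup X)ᵐᵒᵖ :=
    FreeSemigroup.lift (fun x => MulOpposite.op (FreeSemigroup.of (σ x)))
  have hof : ∀ x, (J (FreeSemigroup.of x)).unop = FreeSemigroup.of (σ x) := fun x => by
    simp [J]
  have hmul : ∀ u v, (J (u * v)).unop = (J v).unop * (J u).unop := fun u v => by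
    rw [map_mul, MulOpposite.unop_mul]
  refine ⟨fun u => (J u).unop, fun u => ?_, fun u => ?_, fun u => ?_⟩
  · induction u using FreeSemigroup.recOnMul with
    | ih1 x => simp only [hof, hσ]
    | ih2 x y hx hy => simp only [hmul] at *; rw [hx, hy]
  · induction u using FreeSemigroup.recOnMul with
    | ih1 x => simp only [hof, FreeSemigroup.length_of]
    | ih2 x y hx hy => simp only [hmul, FreeSemigroup.length_mul] at *; omega
  · induction u using FreeSemigroup.recOnMul with
    | ih1 x => simp only [hof, hπσ]
    | ih2 x y hx hy => simp only [hmul] at *; rw [map_mul, map_mul, mul_inv_rev, hx, hy]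

theorem lambda_finite_card {X : Type} {G : Type*} [Group G] [Fintype X]
    (π : FreeSemigroup X →ₙ* G) (g : G) (n : ℕ) :
    Finite {w : FreeSemigroup X // w.length = n ∧ π w = g} ∧
      lambdaFn π g n ≤ Fintype.card X ^ n := by
  let f : {w : FreeSemigroup X // w.length = n ∧ π w = g} → List.Vector X n :=
    fun w => ⟨w.1.head :: w.1.tail, w.2.1⟩
  have hf : Function.Injective f := by
    rintro ⟨⟨a, s⟩, _⟩ ⟨⟨b, t⟩, _⟩ h
    have h' := congrArg Subtype.val h
    simp only [f, List.cons.injEq] at h'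
    simp [h'.1, h'.2]
  refine ⟨Finite.of_injective f hf, ?_⟩
  calc lambdaFn π g n ≤ Nat.card (List.Vector X n) := Nat.card_le_card_of_injective f hf
    _ = Fintype.card X ^ n := by rw [Nat.card_eq_fintype_card, card_vector]

theorem lambda_shift {X : Type} {G : Type*} [Group G] [Fintype X]
    (π : FreeSemigroup X →ₙ* G) (hπ : Function.Surjective π) (a b : G) :
    ∃ c, ∀ n, lambdaFn π a n ≤ lambdaFn π (a * b) (n + c) := by
  obtain ⟨z, hz⟩ := hπ b
  refine ⟨z.length, fun n => ?_⟩
  have := (lambda_finite_card π (a * b) (n + z.length)).1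
  refine Nat.card_le_card_of_injective
    (fun w => ⟨w.1 * z, by rw [FreeSemigroup.length_mul, w.2.1], by rw [map_mul, w.2.2, hz]⟩) ?_
  rintro ⟨u, hu⟩ ⟨v, hv⟩ h
  exact Subtype.ext (words_mul_inj (congrArg Subtype.val h) (hu.1.trans hv.1.symm)).1

theorem gamma_le_lambda {X : Type} {G : Type*} [Group G] [Fintype X]
    (π : FreeSemigroup X →ₙ* G) (hsym : IsSymmetricChoice π) (n : ℕ) :
    Finite {p : FreeSemigroup X × FreeSemigroup X //
      p.1.length + p.2.length = n ∧ π p.1 = π p.2} ∧ gammaFn π n ≤ n * lambdaFn π 1 n := by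
  obtain ⟨I, hI, hlen, hinv⟩ := exists_formal_inverse π hsym
  have := (lambda_finite_card π 1 n).1
  let f : {p : FreeSemigroup X × FreeSemigroup X //
      p.1.length + p.2.length = n ∧ π p.1 = π p.2} →
      Fin n × {w : FreeSemigroup X // w.length = n ∧ π w = 1} := fun p =>
    (⟨p.1.1.length, by
        have h := p.2.1
        have h' : 0 < p.1.2.length := Nat.succ_pos _
        omega⟩,
      ⟨p.1.1 * I p.1.2, by rw [FreeSemigroup.length_mul, hlen, p.2.1], by
        rw [map_mul, hinv, p.2.2, mul_inv_cancel]⟩)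
  have hf : Function.Injective f := by
    rintro ⟨⟨u, v⟩, _⟩ ⟨⟨u', v'⟩, _⟩ h
    simp only [f, Prod.mk.injEq, Fin.mk.injEq, Subtype.mk.injEq] at h
    obtain ⟨h1, h2⟩ := words_mul_inj h.2 h.1
    have h3 : v = v' := by rw [← hI v, h2, hI]
    simp [h1, h3]
  refine ⟨Finite.of_injective f hf, ?_⟩
  calc gammaFn π n ≤ Nat.card (Fin n × {w : FreeSemigroup X // w.length = n ∧ π w = 1}) :=
        Nat.card_le_card_of_injective f hf
    _ = n * lambdaFn π 1 n := by rw [Nat.card_prod, Nat.card_fin]; rfl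

theorem lambda_le_gamma {X : Type} {G : Type*} [Group G] [Fintype X]
    (π : FreeSemigroup X →ₙ* G) (hsym : IsSymmetricChoice π) (n : ℕ) (hn : 2 ≤ n) :
    lambdaFn π 1 n ≤ gammaFn π n := by
  have := (gamma_le_lambda π hsym n).1
  obtain ⟨I, hI, hlen, hinv⟩ := exists_formal_inverse π hsym
  refine Nat.card_le_card_of_surjective
    (fun p => ⟨p.1.1 * I p.1.2, by rw [FreeSemigroup.length_mul, hlen, p.2.1], by
        rw [map_mul, hinv, p.2.2, mul_inv_cancel]⟩) ?_
  -- A word of length at least 2 is split after its first letter.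
  rintro ⟨⟨a, _ | ⟨b, t⟩⟩, hl, h1⟩
  · simp only [FreeSemigroup.length, List.length_nil] at hl
    omega
  · have hw : (⟨a, b :: t⟩ : FreeSemigroup X) = FreeSemigroup.of a * ⟨b, t⟩ := rfl
    rw [hw] at hl h1
    refine ⟨⟨(FreeSemigroup.of a, I ⟨b, t⟩), ?_, ?_⟩, Subtype.ext ?_⟩
    · rwa [hlen, ← FreeSemigroup.length_mul]
    · rw [map_mul] at h1
      rw [hinv]
      exact eq_inv_of_mul_eq_one_left h1
    · simp only [hI]
      exact hw.symm

/-- A linear factor and a bounded shift of the argument do not increase the exponential growth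
rate. The bounds by `k ^ n` make the real-valued limsups genuine. -/
theorem limsup_root_le (f h : ℕ → ℕ) (c k : ℕ)
    (hfh : ∀ᶠ n in atTop, f n ≤ n * h (n + c)) (hk : ∀ n, h n ≤ k ^ n) :
    atTop.limsup (fun n : ℕ => (f n : ℝ) ^ (1 / (n : ℝ))) ≤
      atTop.limsup (fun n : ℕ => (h n : ℝ) ^ (1 / (n : ℝ))) := by
  have hbdd : IsBoundedUnder (· ≤ ·) atTop (fun n : ℕ => (h n : ℝ) ^ (1 / (n : ℝ))) := by
    refine isBoundedUnder_of_eventually_le (a := (k : ℝ)) ?_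
    filter_upwards [eventually_ge_atTop 1] with n hn
    calc (h n : ℝ) ^ (1 / (n : ℝ)) ≤ ((k : ℝ) ^ n) ^ (1 / (n : ℝ)) := by
          gcongr
          exact_mod_cast hk n
      _ = k := by
          rw [one_div]
          exact Real.pow_rpow_inv_natCast (by positivity) (by omega)
  have h0 : 0 ≤ atTop.limsup (fun n : ℕ => (h n : ℝ) ^ (1 / (n : ℝ))) :=
    le_limsup_of_frequently_le (Frequently.of_forall fun n => by positivity) hbdd
  refine le_of_forall_gt_imp_ge_of_dense fun r hr => ?_
  have hr0 : 0 < r := h0.trans_lt hr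
  have hev : ∀ᶠ n : ℕ in atTop, (h n : ℝ) ≤ r ^ n := by
    filter_upwards [eventually_lt_of_limsup_lt hr hbdd, eventually_ge_atTop 1] with n hn h1
    calc (h n : ℝ) = ((h n : ℝ) ^ (1 / (n : ℝ))) ^ n := by
          rw [one_div]
          exact (Real.rpow_inv_natCast_pow (by positivity) (by omega)).symm
      _ ≤ r ^ n := by gcongr
  have hlim : Tendsto (fun n : ℕ => (n : ℝ) ^ (1 / (n : ℝ)) * (r * (r ^ c) ^ (1 / (n : ℝ))))
      atTop (nhds r) := by
    have t1 : Tendsto (fun n : ℕ => (n : ℝ) ^ (1 / (n : ℝ))) atTop (nhds 1) :=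
      tendsto_rpow_div.comp tendsto_natCast_atTop_atTop
    have t2 : Tendsto (fun n : ℕ => (r ^ c) ^ (1 / (n : ℝ))) atTop (nhds ((r ^ c) ^ (0 : ℝ))) :=
      tendsto_const_nhds.rpow tendsto_one_div_atTop_nhds_zero_nat (Or.inl (by positivity))
    simpa using t1.mul (t2.const_mul r)
  rw [← hlim.limsup_eq]
  refine limsup_le_limsup ?_ ?_ hlim.isBoundedUnder_le
  · filter_upwards [hfh, (tendsto_add_atTop_nat c).eventually hev, eventually_ge_atTop 1]
      with n h1 h2 h3
    calc (f n : ℝ) ^ (1 / (n : ℝ)) ≤ ((n : ℝ) * (r ^ n * r ^ c)) ^ (1 / (n : ℝ)) := by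
          gcongr
          calc (f n : ℝ) ≤ n * h (n + c) := by exact_mod_cast h1
            _ ≤ n * (r ^ n * r ^ c) := by rw [← pow_add]; gcongr
      _ = _ := by
          rw [Real.mul_rpow (by positivity) (by positivity),
            Real.mul_rpow (by positivity) (by positivity), one_div,
            Real.pow_rpow_inv_natCast hr0.le (by omega)]
  · exact IsBoundedUnder.isCoboundedUnder_le
      (isBoundedUnder_of_eventually_ge (a := (0 : ℝ)) (Eventually.of_forall fun n => by positivity))

theorem stmt18 {X : Type} {G : Type*} [Group G] [Fintype X] [Nonempty X]
    (π : FreeSemigroup X →ₙ* G) (hπ : Function.Surjective π)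
    (hsym : IsSymmetricChoice π) :
    ∀ g : G, gammaRate π = lambdaRate π g := by
  intro g
  have hk : ∀ a n, lambdaFn π a n ≤ Fintype.card X ^ n := fun a n => (lambda_finite_card π a n).2
  have key : ∀ a b, lambdaRate π a ≤ lambdaRate π b := fun a b => by
    obtain ⟨c, hc⟩ := lambda_shift π hπ a (a⁻¹ * b)
    rw [mul_inv_cancel_left] at hc
    refine limsup_root_le _ _ c _ ?_ (hk b)
    filter_upwards [eventually_ge_atTop 1] with n hn
    exact (hc n).trans (Nat.le_mul_of_pos_left _ hn)
  have h1 : gammaRate π ≤ lambdaRate π 1 :=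
    limsup_root_le _ _ 0 _ (Eventually.of_forall fun n => (gamma_le_lambda π hsym n).2) (hk 1)
  -- The factor `n` in `gamma_le_lambda` is absorbed by enlarging the base to `2 * |X|`.
  have hγ : ∀ n, gammaFn π n ≤ (2 * Fintype.card X) ^ n := fun n =>
    calc gammaFn π n ≤ n * lambdaFn π 1 n := (gamma_le_lambda π hsym n).2
      _ ≤ 2 ^ n * Fintype.card X ^ n := Nat.mul_le_mul Nat.lt_two_pow_self.le (hk 1 n)
      _ = (2 * Fintype.card X) ^ n := (mul_pow _ _ _).symm
  have h2 : lambdaRate π 1 ≤ gammaRate π := by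
    refine limsup_root_le _ _ 0 _ ?_ hγ
    filter_upwards [eventually_ge_atTop 2] with n hn
    exact (lambda_le_gamma π hsym n hn).trans (Nat.le_mul_of_pos_left _ (by omega))
  exact (h1.trans (key 1 g)).antisymm ((key g 1).trans h2)
end

section
/- Let S be a semigroup with a finite choice of generators X via π : X⁺ → S. Then the global cogrowth rate can be computed from the restricted global cogrowth function γ′, as a limit superior or as a supremum: γ = limsup_{n→∞} (γ′(n))^{1/n} = sup_{n ∈ ℕ, n ≥ 1} (γ′(n))^{1/n} = sup over even n ≥ 2 of (γ′(n))^{1/n}. -/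
/-!
Concatenating pairs of words shows that `gammaFn'` is supermultiplicative: from `(u₁, v₁)` and
`(u₂, v₂)` one gets `(u₁u₂, v₁v₂)`. Hence `γ'(m)^(1/m) ≤ γ'(mk)^(1/(mk))` for all `m, k ≥ 1`, so
every term of the supremum is at most the limit superior of `γ'(n)^(1/n)`.

For the comparison with the unrestricted function, fix lengths `(i, j)` with `i + j = n`. Crossing
two pairs of these lengths, `((u₁, v₁), (u₂, v₂)) ↦ (u₁v₂, v₁u₂)`, is injective and balances the
lengths, so the number of such pairs is at most `√γ'(2n)` (`pairCount_sq_le`). Summing over the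
at most `n` choices of `i` gives `γ(n) ≤ n √γ'(2n)` (`gammaFn_le`), and `n^(1/n) → 1`. The theorem
is then the chain of inequalities

  `limsup γ(n)^(1/n) ≤ sup_{n even} γ'(n)^(1/n) ≤ sup_n γ'(n)^(1/n) ≤ limsup γ'(n)^(1/n)
    ≤ limsup γ(n)^(1/n)`,

where the boundedness needed for suprema of reals comes from `γ'(n) ≤ |X|^n`.
-/

open Filter

/-- The restricted global cogrowth function, counting only pairs of words of equal length. -/
noncomputable def gammaFn' {X : Type} {S : Type*} [Mul S]
    (π : FreeSemigroup X →ₙ* S) (n : ℕ) : ℕ :=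
  Nat.card {p : FreeSemigroup X × FreeSemigroup X //
    p.1.length = p.2.length ∧ p.1.length + p.2.length = n ∧ π p.1 = π p.2}

/-! ### Words as lists of letters -/

section Words

variable {X : Type}

/-- The nonempty list of letters of a word of the free semigroup. -/
def wordList (w : FreeSemigroup X) : List X := w.head :: w.tail

lemma wordList_injective : Function.Injective (wordList (X := X)) := by
  rintro ⟨a, l⟩ ⟨b, m⟩ h
  simpa [wordList] using h

lemma wordList_mul (u v : FreeSemigroup X) : wordList (u * v) = wordList u ++ wordList v := by
  simp [wordList]

lemma wordList_length (u : FreeSemigroup X) : (wordList u).length = u.length := by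
  simp [wordList, FreeSemigroup.length]

lemma word_length_pos (u : FreeSemigroup X) : 0 < u.length := by
  simp [FreeSemigroup.length]

lemma word_mul_inj {u v u' v' : FreeSemigroup X} (hl : u.length = u'.length)
    (h : u * v = u' * v') : u = u' ∧ v = v' := by
  have h1 : wordList u ++ wordList v = wordList u' ++ wordList v' := by
    rw [← wordList_mul, ← wordList_mul, h]
  obtain ⟨h2, h3⟩ := List.append_inj h1 (by simpa only [wordList_length] using hl)
  exact ⟨wordList_injective h2, wordList_injective h3⟩

end Words

/-! ### Inequalities between the counting functions -/

section Counting

variable {X : Type} {S : Type*}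

/-- The concatenation `uv` of a pair with `|u| = |v|` and `|u| + |v| = n` determines the pair. -/
lemma restricted_concat_injective [Mul S] (π : FreeSemigroup X →ₙ* S) (n : ℕ) :
    Function.Injective
      (fun p : {p : FreeSemigroup X × FreeSemigroup X //
          p.1.length = p.2.length ∧ p.1.length + p.2.length = n ∧ π p.1 = π p.2} =>
        (⟨wordList (p.1.1 * p.1.2), by
          rw [wordList_length, FreeSemigroup.length_mul]; exact p.2.2.1⟩ :
            List.Vector X n)) := by
  rintro ⟨⟨u, v⟩, h1, h2, h3⟩ ⟨⟨u', v'⟩, h1', h2', h3'⟩ h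
  dsimp only at h1 h2 h1' h2'
  have h4 := wordList_injective (congrArg Subtype.val h)
  have h5 : u.length = u'.length := by omega
  obtain ⟨rfl, rfl⟩ := word_mul_inj h5 h4
  rfl

lemma finite_restricted [Mul S] [Fintype X] (π : FreeSemigroup X →ₙ* S) (n : ℕ) :
    Finite {p : FreeSemigroup X × FreeSemigroup X //
      p.1.length = p.2.length ∧ p.1.length + p.2.length = n ∧ π p.1 = π p.2} :=
  Finite.of_injective (β := List.Vector X n) _ (restricted_concat_injective π n)

lemma gammaFn'_le_pow [Mul S] [Fintype X] (π : FreeSemigroup X →ₙ* S) (n : ℕ) :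
    gammaFn' π n ≤ Fintype.card X ^ n := by
  have h := Nat.card_le_card_of_injective (β := List.Vector X n) _
    (restricted_concat_injective π n)
  rwa [Nat.card_eq_fintype_card (α := List.Vector X n), card_vector] at h

lemma gammaFn'_supermul [Semigroup S] [Fintype X] (π : FreeSemigroup X →ₙ* S) (m n : ℕ) :
    gammaFn' π m * gammaFn' π n ≤ gammaFn' π (m + n) := by
  have := finite_restricted π (m + n)
  unfold gammaFn'
  rw [← Nat.card_prod]
  refine Nat.card_le_card_of_injective
    (fun q => ⟨(q.1.1.1 * q.2.1.1, q.1.1.2 * q.2.1.2), ?_⟩) ?_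
  · obtain ⟨⟨⟨u, v⟩, h1, h2, h3⟩, ⟨⟨u', v'⟩, h1', h2', h3'⟩⟩ := q
    dsimp only at h1 h2 h3 h1' h2' h3'
    simp only [FreeSemigroup.length_mul, map_mul]
    exact ⟨by omega, by omega, by rw [h3, h3']⟩
  · rintro ⟨⟨⟨u, v⟩, h1, h2, h3⟩, ⟨⟨u', v'⟩, h1', h2', h3'⟩⟩
      ⟨⟨⟨a, b⟩, k1, k2, k3⟩, ⟨⟨a', b'⟩, k1', k2', k3'⟩⟩ h
    dsimp only at h1 h2 h1' h2' k1 k2 k1' k2'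
    have h4 := congrArg Subtype.val h
    obtain ⟨h5, h6⟩ := Prod.mk.inj h4
    have hu : u.length = a.length := by omega
    have hv : v.length = b.length := by omega
    obtain ⟨rfl, rfl⟩ := word_mul_inj hu h5
    obtain ⟨rfl, rfl⟩ := word_mul_inj hv h6
    rfl

lemma gammaFn'_pow_le [Semigroup S] [Fintype X] (π : FreeSemigroup X →ₙ* S) (m k : ℕ) :
    gammaFn' π m ^ (k + 1) ≤ gammaFn' π (m * (k + 1)) := by
  induction k with
  | zero => simp
  | succ k ih =>
    calc gammaFn' π m ^ (k + 1 + 1) = gammaFn' π m ^ (k + 1) * gammaFn' π m := pow_succ _ _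
      _ ≤ gammaFn' π (m * (k + 1)) * gammaFn' π m := Nat.mul_le_mul_right _ ih
      _ ≤ gammaFn' π (m * (k + 1) + m) := gammaFn'_supermul π _ _
      _ = gammaFn' π (m * (k + 1 + 1)) := by ring_nf

/-- The number of pairs of words of lengths `i` and `j` representing the same element. -/
noncomputable def pairCount [Mul S] (π : FreeSemigroup X →ₙ* S) (i j : ℕ) : ℕ :=
  Nat.card {p : FreeSemigroup X × FreeSemigroup X //
    p.1.length = i ∧ p.2.length = j ∧ π p.1 = π p.2}

lemma finite_pairs [Mul S] [Fintype X] (π : FreeSemigroup X →ₙ* S) (i j : ℕ) :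
    Finite {p : FreeSemigroup X × FreeSemigroup X //
      p.1.length = i ∧ p.2.length = j ∧ π p.1 = π p.2} := by
  refine Finite.of_injective (β := List.Vector X i × List.Vector X j)
    (fun p => (⟨wordList p.1.1, by rw [wordList_length]; exact p.2.1⟩,
      ⟨wordList p.1.2, by rw [wordList_length]; exact p.2.2.1⟩)) ?_
  rintro ⟨⟨u, v⟩, h⟩ ⟨⟨u', v'⟩, h'⟩ e
  obtain ⟨h1, h2⟩ := Prod.mk.inj e
  obtain rfl := wordList_injective (congrArg Subtype.val h1)
  obtain rfl := wordList_injective (congrArg Subtype.val h2)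
  rfl

/-- The crossing argument: `((u₁, v₁), (u₂, v₂)) ↦ (u₁v₂, v₁u₂)` is injective on pairs with
prescribed lengths, and both words of its value have length `i + j`. -/
lemma pairCount_sq_le [Semigroup S] [Fintype X] (π : FreeSemigroup X →ₙ* S) (i j : ℕ) :
    pairCount π i j * pairCount π i j ≤ gammaFn' π (2 * (i + j)) := by
  have := finite_restricted π (2 * (i + j))
  unfold gammaFn' pairCount
  rw [← Nat.card_prod]
  refine Nat.card_le_card_of_injective
    (fun q => ⟨(q.1.1.1 * q.2.1.2, q.1.1.2 * q.2.1.1), ?_⟩) ?_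
  · obtain ⟨⟨⟨u, v⟩, h1, h2, h3⟩, ⟨⟨u', v'⟩, h1', h2', h3'⟩⟩ := q
    dsimp only at h1 h2 h3 h1' h2' h3'
    simp only [FreeSemigroup.length_mul, map_mul]
    exact ⟨by omega, by omega, by rw [h3, h3']⟩
  · rintro ⟨⟨⟨u, v⟩, h1, h2, h3⟩, ⟨⟨u', v'⟩, h1', h2', h3'⟩⟩
      ⟨⟨⟨a, b⟩, k1, k2, k3⟩, ⟨⟨a', b'⟩, k1', k2', k3'⟩⟩ h
    dsimp only at h1 h2 h1' h2' k1 k2 k1' k2'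
    have h4 := congrArg Subtype.val h
    obtain ⟨h5, h6⟩ := Prod.mk.inj h4
    have hu : u.length = a.length := by omega
    have hv : v.length = b.length := by omega
    obtain ⟨rfl, rfl⟩ := word_mul_inj hu h5
    obtain ⟨rfl, rfl⟩ := word_mul_inj hv h6
    rfl

/-- Sorts the pairs of total length `n` by the length of their first word. -/
lemma sigma_pairs_injective [Mul S] (π : FreeSemigroup X →ₙ* S) (n : ℕ) :
    Function.Injective
      (fun p : {p : FreeSemigroup X × FreeSemigroup X //
          p.1.length + p.2.length = n ∧ π p.1 = π p.2} =>
        (⟨⟨p.1.1.length, by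
            have := word_length_pos p.1.2; have := p.2.1; omega⟩,
          ⟨p.1, rfl, by have := p.2.1; dsimp only; omega, p.2.2⟩⟩ :
        Σ i : Fin n, {p : FreeSemigroup X × FreeSemigroup X //
          p.1.length = i ∧ p.2.length = n - i ∧ π p.1 = π p.2})) := by
  have key : ∀ x y : (Σ i : Fin n, {p : FreeSemigroup X × FreeSemigroup X //
      p.1.length = i ∧ p.2.length = n - i ∧ π p.1 = π p.2}), x = y → x.2.1 = y.2.1 := by
    rintro x _ rfl
    rfl
  intro p q h
  exact Subtype.ext (key _ _ h)

lemma finite_unrestricted [Mul S] [Fintype X] (π : FreeSemigroup X →ₙ* S) (n : ℕ) :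
    Finite {p : FreeSemigroup X × FreeSemigroup X //
      p.1.length + p.2.length = n ∧ π p.1 = π p.2} := by
  have := fun i j => finite_pairs π i j
  exact Finite.of_injective _ (sigma_pairs_injective π n)

lemma gammaFn_le_s19 [Semigroup S] [Fintype X] (π : FreeSemigroup X →ₙ* S) (n : ℕ) :
    gammaFn π n ≤ n * Nat.sqrt (gammaFn' π (2 * n)) := by
  have := fun i j => finite_pairs π i j
  have h := Nat.card_le_card_of_injective _ (sigma_pairs_injective π n)
  rw [Nat.card_sigma] at h
  refine h.trans ((Finset.sum_le_card_nsmul Finset.univ _ (Nat.sqrt (gammaFn' π (2 * n)))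
    fun i _ => Nat.le_sqrt.2 ?_).trans (by simp))
  have h2 := pairCount_sq_le π i (n - i)
  rwa [Nat.add_sub_cancel' i.2.le] at h2

lemma gammaFn'_le_gammaFn [Mul S] [Fintype X] (π : FreeSemigroup X →ₙ* S) (n : ℕ) :
    gammaFn' π n ≤ gammaFn π n := by
  have := finite_unrestricted π n
  refine Nat.card_le_card_of_injective (fun p => ⟨p.1, p.2.2⟩) ?_
  intro p q h
  exact Subtype.ext (Subtype.mk.inj h)

end Counting

/-! ### Inequalities between the roots -/

section Rates

variable {X : Type} {S : Type*}

lemma gammaFn'_rpow_le_card [Mul S] [Fintype X] (π : FreeSemigroup X →ₙ* S) {n : ℕ}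
    (hn : n ≠ 0) : (gammaFn' π n : ℝ) ^ (1 / (n : ℝ)) ≤ Fintype.card X := by
  calc (gammaFn' π n : ℝ) ^ (1 / (n : ℝ)) ≤ ((Fintype.card X : ℝ) ^ n) ^ (1 / (n : ℝ)) :=
        Real.rpow_le_rpow (by positivity) (by exact_mod_cast gammaFn'_le_pow π n) (by positivity)
    _ = Fintype.card X := by
        rw [one_div, Real.pow_rpow_inv_natCast (by positivity) hn]

lemma gammaFn'_rpow_le_mul [Semigroup S] [Fintype X] (π : FreeSemigroup X →ₙ* S) {m : ℕ}
    (hm : m ≠ 0) (k : ℕ) : (gammaFn' π m : ℝ) ^ (1 / (m : ℝ)) ≤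
      (gammaFn' π (m * (k + 1)) : ℝ) ^ (1 / ((m * (k + 1) : ℕ) : ℝ)) := by
  have hm' : (m : ℝ) ≠ 0 := by exact_mod_cast hm
  calc (gammaFn' π m : ℝ) ^ (1 / (m : ℝ))
      = ((gammaFn' π m : ℝ) ^ (k + 1)) ^ (1 / ((m * (k + 1) : ℕ) : ℝ)) := by
        rw [← Real.rpow_natCast, ← Real.rpow_mul (by positivity)]
        congr 1
        push_cast
        field_simp
    _ ≤ _ := Real.rpow_le_rpow (by positivity) (by exact_mod_cast gammaFn'_pow_le π m k)
        (by positivity)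

/-- The `n`-th root of `γ(n) ≤ n √γ'(2n)`. -/
lemma gammaFn_rpow_le [Semigroup S] [Fintype X] (π : FreeSemigroup X →ₙ* S) (n : ℕ) :
    (gammaFn π n : ℝ) ^ (1 / (n : ℝ)) ≤ (n : ℝ) ^ (1 / (n : ℝ)) *
      (gammaFn' π (2 * n) : ℝ) ^ (1 / (2 * (n : ℝ))) := by
  have h : (gammaFn π n : ℝ) ≤ n * (gammaFn' π (2 * n) : ℝ) ^ (1 / 2 : ℝ) := by
    calc (gammaFn π n : ℝ) ≤ n * (Nat.sqrt (gammaFn' π (2 * n)) : ℝ) := by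
          exact_mod_cast gammaFn_le_s19 π n
      _ ≤ _ := by
          rw [← Real.sqrt_eq_rpow]
          gcongr
          exact Real.nat_sqrt_le_real_sqrt
  calc (gammaFn π n : ℝ) ^ (1 / (n : ℝ))
      ≤ (n * (gammaFn' π (2 * n) : ℝ) ^ (1 / 2 : ℝ)) ^ (1 / (n : ℝ)) :=
        Real.rpow_le_rpow (by positivity) h (by positivity)
    _ = _ := by
        rw [Real.mul_rpow (by positivity) (by positivity), ← Real.rpow_mul (by positivity)]
        congr 2
        rw [div_mul_div_comm, one_mul]

end Rates

/-! ### Equality of the rates -/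

theorem stmt19 {X : Type} {S : Type*} [Semigroup S] [Fintype X] [Nonempty X]
    (π : FreeSemigroup X →ₙ* S) (hπ : Function.Surjective π) :
    gammaRate π = Filter.atTop.limsup (fun n : ℕ => (gammaFn' π n : ℝ) ^ (1 / (n : ℝ))) ∧
    gammaRate π = ⨆ n : ℕ, (gammaFn' π (n + 1) : ℝ) ^ (1 / ((n : ℝ) + 1)) ∧
    gammaRate π = ⨆ n : ℕ, (gammaFn' π (2 * (n + 1)) : ℝ) ^ (1 / (2 * (n : ℝ) + 2)) := by
  have bddO : BddAbove (Set.range fun n : ℕ =>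
      (gammaFn' π (n + 1) : ℝ) ^ (1 / ((n : ℝ) + 1))) := by
    refine ⟨Fintype.card X, ?_⟩
    rintro _ ⟨n, rfl⟩
    simpa using gammaFn'_rpow_le_card π n.succ_ne_zero
  -- The even-indexed terms are the terms of the full family at the indices `2n + 1`.
  have evenTerm : ∀ n : ℕ, (gammaFn' π (2 * (n + 1)) : ℝ) ^ (1 / (2 * (n : ℝ) + 2)) ≤
      ⨆ n : ℕ, (gammaFn' π (n + 1) : ℝ) ^ (1 / ((n : ℝ) + 1)) := by
    intro n
    refine le_of_eq_of_le ?_ (le_ciSup bddO (2 * n + 1))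
    have : (2 * (n : ℝ) + 2) = ((2 * n + 1 : ℕ) : ℝ) + 1 := by push_cast; ring
    rw [this]
    rfl
  have bddE : BddAbove (Set.range fun n : ℕ =>
      (gammaFn' π (2 * (n + 1)) : ℝ) ^ (1 / (2 * (n : ℝ) + 2))) := by
    refine ⟨⨆ n : ℕ, (gammaFn' π (n + 1) : ℝ) ^ (1 / ((n : ℝ) + 1)), ?_⟩
    rintro _ ⟨n, rfl⟩
    exact evenTerm n
  set E := ⨆ n : ℕ, (gammaFn' π (2 * (n + 1)) : ℝ) ^ (1 / (2 * (n : ℝ) + 2)) with hE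
  set O := ⨆ n : ℕ, (gammaFn' π (n + 1) : ℝ) ^ (1 / ((n : ℝ) + 1)) with hO
  set L := Filter.atTop.limsup (fun n : ℕ => (gammaFn' π n : ℝ) ^ (1 / (n : ℝ))) with hL
  have hEO : E ≤ O := ciSup_le evenTerm
  have hbound : ∀ᶠ n : ℕ in atTop,
      (gammaFn π n : ℝ) ^ (1 / (n : ℝ)) ≤ (n : ℝ) ^ (1 / (n : ℝ)) * E := by
    filter_upwards [eventually_ge_atTop 1] with n hn
    refine (gammaFn_rpow_le π n).trans (mul_le_mul_of_nonneg_left ?_ (by positivity))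
    obtain ⟨k, rfl⟩ : ∃ k, n = k + 1 := ⟨n - 1, by omega⟩
    refine le_of_eq_of_le ?_ (le_ciSup bddE k)
    push_cast
    ring_nf
  have hlim : Tendsto (fun n : ℕ => (n : ℝ) ^ (1 / (n : ℝ)) * E) atTop (nhds E) := by
    have h := (tendsto_rpow_div.comp tendsto_natCast_atTop_atTop).mul_const E
    simpa [Function.comp_def] using h
  have cobdd : ∀ f : ℕ → ℕ, IsCoboundedUnder (· ≤ ·) atTop
      (fun n : ℕ => (f n : ℝ) ^ (1 / (n : ℝ))) := fun f =>
    isCoboundedUnder_le_of_le atTop (x := 0) fun n => by positivity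
  have hbddγ : IsBoundedUnder (· ≤ ·) atTop
      (fun n : ℕ => (gammaFn π n : ℝ) ^ (1 / (n : ℝ))) :=
    hlim.isBoundedUnder_le.mono_le hbound
  have hle : ∀ n : ℕ, (gammaFn' π n : ℝ) ^ (1 / (n : ℝ)) ≤
      (gammaFn π n : ℝ) ^ (1 / (n : ℝ)) := fun n =>
    Real.rpow_le_rpow (by positivity) (by exact_mod_cast gammaFn'_le_gammaFn π n) (by positivity)
  have hbddL : IsBoundedUnder (· ≤ ·) atTop
      (fun n : ℕ => (gammaFn' π n : ℝ) ^ (1 / (n : ℝ))) :=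
    hbddγ.mono_le (Eventually.of_forall hle)
  have hγE : gammaRate π ≤ E := by
    rw [← hlim.limsup_eq]
    exact limsup_le_limsup hbound (cobdd _) hlim.isBoundedUnder_le
  have hLγ : L ≤ gammaRate π :=
    limsup_le_limsup (Eventually.of_forall hle) (cobdd _) hbddγ
  have hOL : O ≤ L := by
    refine ciSup_le fun m => ?_
    -- The term at `m + 1` is dominated along the multiples of `m + 1`.
    refine le_limsup_of_frequently_le ?_ hbddL
    refine frequently_atTop.2 fun N => ⟨(m + 1) * (N + 1), ?_, ?_⟩
    · nlinarith [Nat.zero_le (m * N)]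
    · simpa using gammaFn'_rpow_le_mul π m.succ_ne_zero N
  exact ⟨le_antisymm (hγE.trans (hEO.trans hOL)) hLγ,
    le_antisymm (hγE.trans hEO) (hOL.trans hLγ),
    le_antisymm hγE (hEO.trans (hOL.trans hLγ))⟩
end
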